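/- arXiv:funct-an/9406003 — 3 statements merged into one kernel-verified Lean document; each statement's English description precedes it below -/
import Mathlib

section
/- Any two infinite-dimensional, unital, simple AF C*-algebras are isomorphic as Banach spaces, i.e. there is a continuous ℂ-linear bijection between them with continuous inverse. -/
/-- `S` is an AF presentation of the C*-algebra `A`: an increasing sequence of
finite-dimensional *-subalgebras whose union is dense. -/
def IsAFPresentation (A : Type*) [NonUnitalCStarAlgebra A]
    (S : ℕ → NonUnitalStarSubalgebra ℂ A) : Prop :=
  Monotone S ∧ (∀ k, FiniteDimensional ℂ (S k)) ∧ Dense (⋃ k, (S k : Set A))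

/-- A C*-algebra is simple if its only closed two-sided ideals are `{0}` and
the whole algebra. -/
def IsSimpleCStarAlgebra (A : Type*) [NonUnitalCStarAlgebra A] : Prop :=
  ∀ I : TwoSidedIdeal A, IsClosed (I : Set A) → I = ⊥ ∨ I = ⊤

namespace AFIso

open Filter Topology

/-- unital AF presentation -/
structure UAF (A : Type*) [CStarAlgebra A] (T : ℕ → StarSubalgebra ℂ A) : Prop where
  mono : Monotone T
  fd : ∀ k, FiniteDimensional ℂ (T k)
  dense : Dense (⋃ k, (T k : Set A))

theorem exists_uaf {A : Type*} [CStarAlgebra A]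
    (h : ∃ S : ℕ → NonUnitalStarSubalgebra ℂ A, IsAFPresentation A S) :
    ∃ T : ℕ → StarSubalgebra ℂ A, UAF A T := by
  obtain ⟨S, hm, hfd, hd⟩ := h
  obtain ⟨n, hn⟩ : ∃ n, (1 : A) ∈ S n := by
    obtain ⟨x, hx, hx1⟩ := Metric.dense_iff.1 hd 1 1 one_pos
    obtain ⟨n, hn⟩ := Set.mem_iUnion.1 hx1
    refine ⟨n, ?_⟩
    have hu : IsUnit x := by
      have : ‖1 - x‖ < 1 := by
        rw [← dist_eq_norm, dist_comm]; exact hx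
      have := isUnit_one_sub_of_norm_lt_one this
      simpa using this
    obtain ⟨u, rfl⟩ := hu
    have := hfd n
    let L : S n →ₗ[ℂ] S n :=
      { toFun := fun y => ⟨u * y, mul_mem hn y.2⟩
        map_add' := by intro a b; ext; simp [mul_add]
        map_smul' := by intro a b; ext; simp }
    have hL : Function.Injective L := by
      intro a b hab
      have := congrArg Subtype.val hab
      exact Subtype.ext (u.isUnit.mul_left_cancel this)
    obtain ⟨y, hy⟩ := (LinearMap.injective_iff_surjective.1 hL) ⟨u, hn⟩
    have := congrArg Subtype.val hy
    have h2 : (y : A) = 1 := u.isUnit.mul_left_cancel (by rw [mul_one]; exact this)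
    rw [← h2]; exact y.2
  refine ⟨fun k => { carrier := S (n + k)
                     mul_mem' := fun ha hb => mul_mem ha hb
                     one_mem' := hm (Nat.le_add_right n k) hn
                     add_mem' := fun ha hb => add_mem ha hb
                     zero_mem' := zero_mem _
                     algebraMap_mem' := fun r => by
                       rw [Algebra.algebraMap_eq_smul_one]
                       exact SMulMemClass.smul_mem r (hm (Nat.le_add_right n k) hn)
                     star_mem' := fun ha => star_mem ha }, ?_, ?_, ?_⟩
  · intro i j hij x hx
    exact hm (Nat.add_le_add_left hij n) hx
  · intro k
    exact hfd (n + k)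
  · refine hd.mono ?_
    refine Set.iUnion_subset fun k => ?_
    refine Set.Subset.trans ?_ (Set.subset_iUnion _ k)
    exact hm (Nat.le_add_left k n)

theorem simple_span {B : Type*} [CStarAlgebra B] (hs : IsSimpleCStarAlgebra B) {e : B}
    (he : e ≠ 0) : (1 : B) ∈ Submodule.span ℂ {b | ∃ x y, b = x * e * y} := by
  set M := Submodule.span ℂ {b : B | ∃ x y, b = x * e * y} with hM
  have hl : ∀ x y, y ∈ M → x * y ∈ M := by
    intro x y hy
    induction hy using Submodule.span_induction with
    | mem y hy =>
      obtain ⟨a, b, rfl⟩ := hy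
      exact Submodule.subset_span ⟨x * a, b, by simp [mul_assoc]⟩
    | zero => simp
    | add a b _ _ ha hb => rw [mul_add]; exact add_mem ha hb
    | smul r a _ ha => rw [mul_smul_comm]; exact M.smul_mem r ha
  have hr : ∀ y x, y ∈ M → y * x ∈ M := by
    intro y x hy
    induction hy using Submodule.span_induction with
    | mem y hy =>
      obtain ⟨a, b, rfl⟩ := hy
      exact Submodule.subset_span ⟨a, b * x, by simp [mul_assoc]⟩
    | zero => simp
    | add a b _ _ ha hb => rw [add_mul]; exact add_mem ha hb
    | smul r a _ ha => rw [smul_mul_assoc]; exact M.smul_mem r ha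
  let C := M.topologicalClosure
  let I : TwoSidedIdeal B := TwoSidedIdeal.mk' (C : Set B) C.zero_mem
    (fun ha hb => C.add_mem ha hb) (fun ha => C.neg_mem ha)
    (fun {x y} hy => by
      have : Set.MapsTo (fun y => x * y) (closure (M : Set B)) (closure (M : Set B)) :=
        Set.MapsTo.closure (fun y hy => hl x y hy) (by fun_prop)
      exact this hy)
    (fun {x y} hx => by
      have : Set.MapsTo (fun x => x * y) (closure (M : Set B)) (closure (M : Set B)) :=
        Set.MapsTo.closure (fun x hx => hr x y hx) (by fun_prop)
      exact this hx)
  have hI : (I : Set B) = C := TwoSidedIdeal.coe_mk' ..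
  have heI : e ∈ I := by
    rw [← SetLike.mem_coe, hI]
    exact M.le_topologicalClosure (Submodule.subset_span ⟨1, 1, by simp⟩)
  rcases hs I (by rw [hI]; exact M.isClosed_topologicalClosure) with h | h
  · rw [h] at heI
    exact absurd (by simpa using heI) he
  · have h1 : (1 : B) ∈ closure (M : Set B) := by
      have : (1 : B) ∈ (I : Set B) := by rw [h]; trivial
      rw [hI] at this; exact this
    obtain ⟨m, hm, hmd⟩ := Metric.mem_closure_iff.1 h1 1 one_pos
    have hu : IsUnit m := by
      rw [dist_eq_norm] at hmd
      simpa using isUnit_one_sub_of_norm_lt_one hmd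
    obtain ⟨u, rfl⟩ := hu
    have := hl (↑u⁻¹ : B) u hm
    simpa using this

theorem simple_mul_ne {B : Type*} [CStarAlgebra B] (hs : IsSimpleCStarAlgebra B) {e p : B}
    (he : e ≠ 0) (hp : p ≠ 0) : ∃ b, e * b * p ≠ 0 := by
  by_contra! h
  have h1 := simple_span hs he
  have : ∀ m ∈ Submodule.span ℂ {b | ∃ x y, b = x * e * y}, m * p = 0 := by
    intro m hm
    induction hm using Submodule.span_induction with
    | mem y hy =>
      obtain ⟨a, b, rfl⟩ := hy
      rw [show a * e * b * p = a * (e * b * p) by simp [mul_assoc], h, mul_zero]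
    | zero => simp
    | add a b _ _ ha hb => rw [add_mul, ha, hb, add_zero]
    | smul r a _ ha => rw [smul_mul_assoc, ha, smul_zero]
  exact hp (by simpa using this 1 h1)

theorem simple_fd {B : Type*} [CStarAlgebra B] (hs : IsSimpleCStarAlgebra B) {e : B}
    (he : e ≠ 0) (h : ∀ b, ∃ c : ℂ, e * b * e = c • e) : FiniteDimensional ℂ B := by
  obtain ⟨T, hT, h1⟩ := Submodule.mem_span_finite_of_mem_span (simple_span hs he)
  have hT' : ∀ t ∈ T, ∃ x y, t = x * e * y := fun t ht => hT ht
  choose! X Y hXY using hT'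
  have key : ∀ t ∈ T, ∀ t' ∈ T, ∀ b, t * b * t' ∈
      Submodule.span ℂ (Set.image2 (fun t t' => X t * e * Y t') (T : Set B) (T : Set B)) := by
    intro t ht t' ht' b
    obtain ⟨c, hc⟩ := h (Y t * b * X t')
    have : t * b * t' = c • (X t * e * Y t') := by
      calc t * b * t' = (X t * e * Y t) * b * (X t' * e * Y t') := by
            rw [← hXY t ht, ← hXY t' ht']
        _ = X t * (e * (Y t * b * X t') * e) * Y t' := by simp only [mul_assoc]
        _ = _ := by rw [hc]; simp
    rw [this]
    exact Submodule.smul_mem _ _ (Submodule.subset_span ⟨t, ht, t', ht', rfl⟩)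
  have hfin : (Set.image2 (fun t t' => X t * e * Y t') (T : Set B) (T : Set B)).Finite :=
    (T.finite_toSet).image2 _ T.finite_toSet
  have h2 : ∀ m ∈ Submodule.span ℂ (T : Set B), ∀ t' ∈ T, ∀ b, m * b * t' ∈
      Submodule.span ℂ (Set.image2 (fun t t' => X t * e * Y t') (T : Set B) (T : Set B)) := by
    intro m hm t' ht' b
    induction hm using Submodule.span_induction with
    | mem y hy => exact key y hy t' ht' b
    | zero => simp
    | add x y _ _ hx hy => rw [add_mul, add_mul]; exact add_mem hx hy
    | smul r x _ hx => rw [smul_mul_assoc, smul_mul_assoc]; exact Submodule.smul_mem _ _ hx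
  have h3 : ∀ m ∈ Submodule.span ℂ (T : Set B), ∀ b, b * m ∈
      Submodule.span ℂ (Set.image2 (fun t t' => X t * e * Y t') (T : Set B) (T : Set B)) := by
    intro m hm b
    induction hm using Submodule.span_induction with
    | mem y hy => simpa using h2 1 h1 y hy b
    | zero => simp
    | add x y _ _ hx hy => rw [mul_add]; exact add_mem hx hy
    | smul r x _ hx => rw [mul_smul_comm]; exact Submodule.smul_mem _ _ hx
  refine ⟨⟨hfin.toFinset, ?_⟩⟩
  rw [Set.Finite.coe_toFinset, eq_top_iff]
  intro b _
  simpa using h3 1 h1 b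

section FD
variable {D : Type*} [CStarAlgebra D] [FiniteDimensional ℂ D]

theorem fd_not_unit (y : D) (hy : ¬ IsUnit y) : ∃ a : D, a ≠ 0 ∧ y * a = 0 := by
  by_contra! h
  have hinj : Function.Injective (LinearMap.mulLeft ℂ y) := by
    rw [← LinearMap.ker_eq_bot, LinearMap.ker_eq_bot']
    intro a ha
    by_contra hne
    exact h a hne ha
  obtain ⟨x, hx⟩ := (LinearMap.injective_iff_surjective.1 hinj) 1
  have hx' : y * x = 1 := hx
  have h2 : x * y = 1 := by
    apply hinj
    simp [← mul_assoc, hx']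
  exact hy ⟨⟨y, x, hx', h2⟩, rfl⟩

theorem fd_eigen {h : D} {μ : ℝ} (hμ : μ ∈ spectrum ℝ h) : ∃ a : D, a ≠ 0 ∧ h * a = μ • a := by
  obtain ⟨a, ha, h0⟩ := fd_not_unit _ hμ
  refine ⟨a, ha, ?_⟩
  rw [sub_mul, sub_eq_zero, Algebra.algebraMap_eq_smul_one, smul_mul_assoc, one_mul] at h0
  exact h0.symm

theorem fd_spectrum_finite (h : D) : (spectrum ℝ h).Finite := by
  have h1 := Module.End.finite_hasEigenvalue (LinearMap.mulLeft ℂ h)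
  have h2 : (spectrum ℝ h) ⊆ (fun x : ℝ => (x : ℂ)) ⁻¹'
      {μ | Module.End.HasEigenvalue (LinearMap.mulLeft ℂ h) μ} := by
    intro μ hμ
    obtain ⟨a, ha, h0⟩ := fd_eigen hμ
    refine Module.End.hasEigenvalue_of_hasEigenvector (x := a) ⟨?_, ha⟩
    rw [Module.End.mem_eigenspace_iff]
    simpa using h0
  exact (h1.preimage (Complex.ofReal_injective.injOn)).subset h2

theorem fd_spectral_proj {h : D} (hsa : IsSelfAdjoint h) (h0 : h ≠ 0) :
    ∃ μ : ℝ, μ ≠ 0 ∧ ∃ p : D, IsSelfAdjoint p ∧ p * p = p ∧ p ≠ 0 ∧ h * p = μ • p ∧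
      p * h = μ • p := by
  have : Nontrivial D := ⟨⟨h, 0, h0⟩⟩
  obtain ⟨μ, hμ0, hμ⟩ : ∃ μ : ℝ, μ ≠ 0 ∧ μ ∈ spectrum ℝ h := by
    have hn : ‖h‖ ≠ 0 := norm_ne_zero_iff.2 h0
    rcases CStarAlgebra.norm_or_neg_norm_mem_spectrum hsa with h | h
    · exact ⟨_, hn, h⟩
    · exact ⟨_, neg_ne_zero.2 hn, h⟩
  let f : ℝ → ℝ := fun x => if x = μ then 1 else 0
  have hf : ContinuousOn f (spectrum ℝ h) := (fd_spectrum_finite h).continuousOn f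
  have h1 : h * cfc f h = μ • cfc f h := by
    have e1 : h * cfc f h = cfc (fun x => x * f x) h := by
      rw [cfc_mul (fun x : ℝ => x) f h (by fun_prop) hf, cfc_id' ℝ h]
    rw [e1, ← cfc_smul μ f h hf]
    congr 1
    ext x
    by_cases hx : x = μ <;> simp [f, hx]
  have h2 : cfc f h * h = μ • cfc f h := by
    rw [← h1]
    exact (cfc_commute_cfc f (fun x : ℝ => x) h).eq.trans (by rw [cfc_id' ℝ h]) |> fun H => by
      rwa [cfc_id' ℝ h] at H
  refine ⟨μ, hμ0, cfc f h, cfc_predicate f h, ?_, ?_, h1, h2⟩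
  · rw [← cfc_mul f f h hf hf]
    congr 1
    ext x
    by_cases hx : x = μ <;> simp [f, hx]
  · intro hz
    have h3 : cfc f h = cfc (fun _ : ℝ => (0 : ℝ)) h := by rw [hz]; simp
    have h4 := (cfc_eq_cfc_iff_eqOn (R := ℝ) (a := h) hsa hf (by fun_prop)).1 h3 hμ
    simp [f] at h4

/-- the regular trace -/
noncomputable def rtr (D : Type*) [CStarAlgebra D] : D →ₗ[ℂ] ℂ :=
  (LinearMap.trace ℂ D) ∘ₗ (LinearMap.mul ℂ D)

theorem rtr_comm (x y : D) : rtr D (x * y) = rtr D (y * x) := by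
  have h : ∀ x y : D, LinearMap.mul ℂ D (x * y) = LinearMap.mul ℂ D x * LinearMap.mul ℂ D y := by
    intro x y; ext z; simp [mul_assoc]
  simp only [rtr, LinearMap.comp_apply, h]
  exact LinearMap.trace_mul_comm ℂ _ _

theorem rtr_roots (h : D) :
    rtr D h = ((LinearMap.mul ℂ D h : Module.End ℂ D)).charpoly.roots.sum :=
  Module.End.trace_eq_sum_roots_charpoly_of_splits (IsAlgClosed.splits _)

theorem rtr_root_spec {h : D} {z : ℂ}
    (hz : z ∈ ((LinearMap.mul ℂ D h : Module.End ℂ D)).charpoly.roots) : z ∈ spectrum ℂ h := by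
  have h1 := Polynomial.isRoot_of_mem_roots hz
  rw [← Module.End.hasEigenvalue_iff_isRoot_charpoly] at h1
  obtain ⟨v, hv, hv0⟩ := h1.exists_hasEigenvector
  rw [Module.End.mem_eigenspace_iff] at hv
  intro hu
  apply hv0
  have : (algebraMap ℂ D z - h) * v = 0 := by
    rw [sub_mul, Algebra.algebraMap_eq_smul_one, smul_mul_assoc, one_mul, ← hv]
    simp
  exact hu.mul_right_eq_zero.1 this

theorem rtr_root_pos {x : D} {z : ℂ}
    (hz : z ∈ ((LinearMap.mul ℂ D (star x * x) : Module.End ℂ D)).charpoly.roots) :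
    z = (z.re : ℂ) ∧ 0 ≤ z.re := by
  have h1 := rtr_root_spec hz
  have h2 := (IsSelfAdjoint.star_mul_self x).mem_spectrum_eq_re h1
  refine ⟨h2, ?_⟩
  rw [h2] at h1
  have h3 : z.re ∈ spectrum ℝ (star x * x) :=
    (IsSelfAdjoint.star_mul_self x).coe_mem_spectrum_complex.1 h1
  exact spectrum_star_mul_self_nonneg z.re h3

theorem rtr_pos (x : D) : 0 ≤ (rtr D (star x * x)).re ∧ (rtr D (star x * x)).im = 0 := by
  rw [rtr_roots]
  have : ∀ s : Multiset ℂ, (∀ z ∈ s, z = (z.re : ℂ) ∧ 0 ≤ z.re) → 0 ≤ s.sum.re ∧ s.sum.im = 0 := by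
    intro s
    induction s using Multiset.induction_on with
    | empty => simp
    | cons a s ih =>
      intro h
      obtain ⟨i1, i2⟩ := ih fun z hz => h z (Multiset.mem_cons_of_mem hz)
      obtain ⟨a1, a2⟩ := h a (Multiset.mem_cons_self a s)
      have a3 : a.im = 0 := by rw [a1]; simp
      simp only [Multiset.sum_cons, Complex.add_re, Complex.add_im, a3, i2]
      exact ⟨by linarith, by simp⟩
  exact this _ fun z hz => rtr_root_pos hz

theorem rtr_faithful {x : D} (hx : rtr D (star x * x) = 0) : x = 0 := by
  rw [rtr_roots] at hx
  have key : ∀ s : Multiset ℂ, (∀ z ∈ s, z = (z.re : ℂ) ∧ 0 ≤ z.re) → 0 ≤ s.sum.re ∧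
      (s.sum.re = 0 → ∀ z ∈ s, z = 0) := by
    intro s
    induction s using Multiset.induction_on with
    | empty => simp
    | cons a s ih =>
      intro h
      obtain ⟨i1, i2⟩ := ih fun z hz => h z (Multiset.mem_cons_of_mem hz)
      obtain ⟨a1, a2⟩ := h a (Multiset.mem_cons_self a s)
      simp only [Multiset.sum_cons, Complex.add_re]
      refine ⟨by linarith, fun h0 z hz => ?_⟩
      have b1 : a.re = 0 := by linarith
      have b2 : s.sum.re = 0 := by linarith
      rcases Multiset.mem_cons.1 hz with rfl | hz
      · rw [a1, b1]; simp
      · exact i2 b2 z hz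
  have h0 := (key _ fun z hz => rtr_root_pos (x := x) hz).2 (by rw [hx]; simp)
  by_contra hne
  have hh : star x * x ≠ 0 := fun h => hne ((CStarRing.star_mul_self_eq_zero_iff x).1 h)
  obtain ⟨μ, hμ, p, -, -, hp, hhp, -⟩ := fd_spectral_proj (IsSelfAdjoint.star_mul_self x) hh
  have hev : Module.End.HasEigenvalue (LinearMap.mul ℂ D (star x * x)) (μ : ℂ) := by
    refine Module.End.hasEigenvalue_of_hasEigenvector (x := p) ⟨?_, hp⟩
    rw [Module.End.mem_eigenspace_iff]
    simpa using hhp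
  rw [Module.End.hasEigenvalue_iff_isRoot_charpoly] at hev
  have := h0 (μ : ℂ) ((Polynomial.mem_roots (LinearMap.charpoly_monic _).ne_zero).2 hev)
  exact hμ (by exact_mod_cast this)

theorem rtr_star (x : D) : rtr D (star x) = star (rtr D x) := by
  -- polarization
  have p1 := (rtr_pos (1 + x)).2
  have p2 := (rtr_pos (1 + Complex.I • x)).2
  have p3 := (rtr_pos x).2
  have p4 := (rtr_pos (1 : D)).2
  simp only [star_add, star_one, mul_add, add_mul, one_mul, mul_one, map_add, star_smul,
    smul_mul_assoc, mul_smul_comm, map_smul, Complex.add_im] at p1 p2 p3 p4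
  simp [smul_smul] at p2
  apply Complex.ext
  · simp; linarith
  · simp; linarith

theorem onb_exists {V : Type*} [AddCommGroup V] [Module ℂ V] [FiniteDimensional ℂ V]
    (c : InnerProductSpace.Core ℂ V) : ∃ (d : ℕ) (m : Fin d → V),
      (∀ i j, c.inner (m i) (m j) = if i = j then 1 else 0) ∧
      ∀ x, ∑ i, c.inner (m i) x • m i = x := by
  let : NormedAddCommGroup V := c.toNormedAddCommGroup
  let : InnerProductSpace ℂ V := InnerProductSpace.ofCore c.toCore
  let b := stdOrthonormalBasis ℂ V
  refine ⟨_, b, ?_, ?_⟩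
  · intro i j
    exact orthonormal_iff_ite.1 b.orthonormal i j
  · intro x
    exact b.sum_repr' x

theorem norm_sub_eq_star_mul (x : D) :
    ∃ w : D, ((‖x‖ ^ 2 : ℝ) : ℂ) • (1 : D) - star x * x = star w * w := by
  let : PartialOrder D := CStarAlgebra.spectralOrder D
  let : StarOrderedRing D := CStarAlgebra.spectralOrderedRing D
  have h : star x * x ≤ algebraMap ℝ D (‖x‖ ^ 2) := CStarAlgebra.star_mul_le_algebraMap_norm_sq
  have h2 := sub_nonneg.2 h
  obtain ⟨w, hw⟩ := CStarAlgebra.nonneg_iff_eq_star_mul_self.1 h2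
  refine ⟨w, ?_⟩
  rw [← hw, Algebra.algebraMap_eq_smul_one, Complex.coe_smul]

end FD

section TraceSec
variable {A : Type*} [CStarAlgebra A]

theorem fd_closed (S : StarSubalgebra ℂ A) [FiniteDimensional ℂ S] : IsClosed (S : Set A) := by
  have : FiniteDimensional ℂ (Subalgebra.toSubmodule S.toSubalgebra) :=
    inferInstanceAs (FiniteDimensional ℂ S)
  exact Submodule.closed_of_finiteDimensional (Subalgebra.toSubmodule S.toSubalgebra)

structure TraceData (S : StarSubalgebra ℂ A) (τ : A →ₗ[ℂ] ℂ) (d : ℕ) (m : Fin d → A) : Prop where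
  tr : ∀ x ∈ S, ∀ y ∈ S, τ (x * y) = τ (y * x)
  pos : ∀ x ∈ S, 0 ≤ (τ (star x * x)).re
  st : ∀ x ∈ S, τ (star x) = star (τ x)
  faith : ∀ x ∈ S, τ (star x * x) = 0 → x = 0
  mem : ∀ i, m i ∈ S
  rep : ∀ x ∈ S, ∑ i, τ (star (m i) * x) • m i = x
  orth : ∀ i j, τ (star (m i) * m j) = if i = j then 1 else 0
  sum : ∑ i, m i * star (m i) = 1

/-- inner product core from a faithful trace -/
theorem onb_sub (S S0 : StarSubalgebra ℂ A) [FiniteDimensional ℂ S0] (hS : S0 ≤ S)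
    (τ : A →ₗ[ℂ] ℂ)
    (pos : ∀ x ∈ S, 0 ≤ (τ (star x * x)).re)
    (st : ∀ x ∈ S, τ (star x) = star (τ x))
    (faith : ∀ x ∈ S, τ (star x * x) = 0 → x = 0) :
    ∃ (d : ℕ) (m : Fin d → A), (∀ i, m i ∈ S0) ∧
      (∀ x ∈ S0, ∑ i, τ (star (m i) * x) • m i = x) ∧
      (∀ i j, τ (star (m i) * m j) = if i = j then 1 else 0) := by
  let c : InnerProductSpace.Core ℂ S0 :=
    { inner := fun x y => τ (star (x : A) * y)
      conj_inner_symm := by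
        intro x y
        have := st (star (y : A) * x) (mul_mem (star_mem (hS y.2)) (hS x.2))
        rw [star_mul, star_star] at this
        rw [this]; rfl
      re_inner_nonneg := fun x => pos x (hS x.2)
      add_left := by intro x y z; simp [add_mul]
      smul_left := by intro x y r; simp
      definite := by
        intro x hx
        exact Subtype.ext (faith x (hS x.2) hx) }
  obtain ⟨d, m, h1, h2⟩ := onb_exists c
  refine ⟨d, fun i => m i, fun i => (m i).2, ?_, fun i j => h1 i j⟩
  intro x hx
  have := congrArg Subtype.val (h2 ⟨x, hx⟩)
  rw [← S0.coe_subtype, map_sum] at this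
  exact this

theorem exists_traceData (S : StarSubalgebra ℂ A) [FiniteDimensional ℂ S] :
    ∃ (τ : A →ₗ[ℂ] ℂ) (d : ℕ) (m : Fin d → A), TraceData S τ d m := by
  have hcl : IsClosed (S : Set A) := fd_closed S
  let _ : CStarAlgebra S := StarSubalgebra.cstarAlgebra S
  obtain ⟨τ, hτ⟩ := LinearMap.exists_extend (p := Subalgebra.toSubmodule S.toSubalgebra) (rtr S)
  have hτ' : ∀ x : S, τ x = rtr S x := fun x => LinearMap.congr_fun hτ x
  have tr : ∀ x ∈ S, ∀ y ∈ S, τ (x * y) = τ (y * x) := by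
    intro x hx y hy
    have := rtr_comm (D := S) ⟨x, hx⟩ ⟨y, hy⟩
    rw [← hτ', ← hτ'] at this
    exact this
  have pos : ∀ x ∈ S, 0 ≤ (τ (star x * x)).re := by
    intro x hx
    have := (rtr_pos (D := S) ⟨x, hx⟩).1
    rw [← hτ'] at this
    exact this
  have st : ∀ x ∈ S, τ (star x) = star (τ x) := by
    intro x hx
    have := (rtr_star (D := S) ⟨x, hx⟩)
    rw [← hτ', ← hτ'] at this
    exact this
  have faith : ∀ x ∈ S, τ (star x * x) = 0 → x = 0 := by
    intro x hx h
    have := rtr_faithful (D := S) (x := ⟨x, hx⟩) (by rw [← hτ']; exact h)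
    exact congrArg Subtype.val this
  obtain ⟨d, m, mem, rep, orth⟩ := onb_sub S S le_rfl τ pos st faith
  refine ⟨τ, d, m, tr, pos, st, faith, mem, rep, orth, ?_⟩
  have hreg : ∀ x ∈ S, τ x = ∑ i, τ (star (m i) * (x * m i)) := by
    intro x hx
    have hli : LinearIndependent ℂ (fun i => (⟨m i, mem i⟩ : S)) := by
      rw [Fintype.linearIndependent_iff]
      intro g hg i
      have h1 := congrArg Subtype.val hg
      rw [← S.coe_subtype, map_sum] at h1
      have h2 := congrArg (fun z => τ (star (m i) * z)) h1
      simpa [Finset.mul_sum, orth] using h2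
    have hsp : ⊤ ≤ Submodule.span ℂ (Set.range fun i => (⟨m i, mem i⟩ : S)) := by
      intro y _
      have : y = ∑ i, τ (star (m i) * y) • (⟨m i, mem i⟩ : S) := by
        apply Subtype.ext
        rw [← S.coe_subtype, map_sum]
        simpa using (rep y y.2).symm
      rw [this]
      exact Submodule.sum_mem _ fun i _ => Submodule.smul_mem _ _ (Submodule.subset_span ⟨i, rfl⟩)
    let b := Module.Basis.mk hli hsp
    have hb : ∀ i, (b i : A) = m i := by intro i; simp [b]
    have hr : ∀ (y : S) i, b.repr y i = τ (star (m i) * y) := by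
      intro y i
      have h1 := congrArg Subtype.val (b.sum_repr y)
      rw [← S.coe_subtype, map_sum] at h1
      have h2 := congrArg (fun z => τ (star (m i) * z)) h1
      simpa [Finset.mul_sum, hb, orth] using h2
    have h3 := hτ' ⟨x, hx⟩
    rw [rtr, LinearMap.comp_apply, LinearMap.trace_eq_matrix_trace ℂ b, Matrix.trace] at h3
    refine h3.trans (Finset.sum_congr rfl fun i _ => ?_)
    rw [Matrix.diag_apply, LinearMap.toMatrix_apply, hr]
    simp [hb]
  have hc : ∑ i, m i * star (m i) ∈ S := sum_mem fun i _ => mul_mem (mem i) (star_mem (mem i))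
  have hd : ∑ i, m i * star (m i) - 1 ∈ S := sub_mem hc (one_mem S)
  refine sub_eq_zero.1 (faith _ hd ?_)
  have key : ∀ x ∈ S, τ (x * (∑ i, m i * star (m i) - 1)) = 0 := by
    intro x hx
    rw [mul_sub, mul_one, map_sub, Finset.mul_sum, map_sum, sub_eq_zero, hreg x hx]
    refine Finset.sum_congr rfl fun i _ => ?_
    rw [← mul_assoc, tr (x * m i) (mul_mem hx (mem i)) _ (star_mem (mem i))]
  exact key _ (star_mem hd)

theorem exists_expectation (S0 S : StarSubalgebra ℂ A) [FiniteDimensional ℂ S0]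
    [FiniteDimensional ℂ S] (hS : S0 ≤ S) :
    ∃ E : A →ₗ[ℂ] A, (∀ x, E x ∈ S0) ∧ (∀ x ∈ S0, E x = x) ∧ ∀ x ∈ S, ‖E x‖ ≤ ‖x‖ := by
  obtain ⟨τ, d0, m0, h⟩ := exists_traceData S
  obtain ⟨d, m, mem, rep, orth⟩ := onb_sub S S0 hS τ h.pos h.st h.faith
  let E : A →ₗ[ℂ] A :=
    { toFun := fun x => ∑ i, τ (star (m i) * x) • m i
      map_add' := by intro x y; simp [mul_add, add_smul, Finset.sum_add_distrib]
      map_smul' := by intro r x; simp [Finset.smul_sum, mul_smul] }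
  have hE : ∀ x, E x ∈ S0 := by
    intro x
    change (∑ i, τ (star (m i) * x) • m i : A) ∈ S0
    exact sum_mem (fun i _ => SMulMemClass.smul_mem (τ (star (m i) * x)) (mem i))
  have hperp0 : ∀ i x, τ (star (m i) * E x) = τ (star (m i) * x) := by
    intro i x
    simp [E, Finset.mul_sum, orth]
  have hperp : ∀ b ∈ S0, ∀ x, τ (star b * (x - E x)) = 0 := by
    intro b hb x
    rw [← rep b hb, star_sum, Finset.sum_mul, map_sum]
    refine Finset.sum_eq_zero fun i _ => ?_
    rw [star_smul, smul_mul_assoc, map_smul, mul_sub, map_sub, hperp0, sub_self, smul_zero]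
  have huniq : ∀ y ∈ S0, ∀ x ∈ S, (∀ b ∈ S0, τ (star b * (x - y)) = 0) → E x = y := by
    intro y hy x hx hb
    rw [← rep y hy]
    change (∑ i, τ (star (m i) * x) • m i : A) = _
    refine Finset.sum_congr rfl fun i _ => ?_
    have := hb (m i) (mem i)
    rw [mul_sub, map_sub, sub_eq_zero] at this
    rw [this]
  have hmod : ∀ x ∈ S, ∀ a ∈ S0, E (x * a) = E x * a := by
    intro x hx a ha
    refine huniq _ (mul_mem (hE x) ha) _ (mul_mem hx (hS ha)) fun b hb => ?_
    rw [← sub_mul, ← mul_assoc, h.tr _ (mul_mem (star_mem (hS hb)) (sub_mem hx (hS (hE x)))) _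
      (hS ha), ← mul_assoc]
    have := hperp (b * star a) (mul_mem hb (star_mem ha)) x
    rwa [star_mul, star_star] at this
  have hcontr : ∀ y ∈ S, (τ (star (E y) * E y)).re ≤ (τ (star y * y)).re := by
    intro y hy
    have h1 : τ (star y * y) = τ (star (E y) * E y) + τ (star (y - E y) * (y - E y)) := by
      have e1 := hperp (E y) (hE y) y
      have e2 := h.st _ (mul_mem (star_mem (hS (hE y))) (sub_mem hy (hS (hE y))))
      rw [e1, star_zero, star_mul, star_star] at e2
      have : star y * y = star (E y) * E y + star (y - E y) * (y - E y) +
        star (E y) * (y - E y) + star (y - E y) * E y := by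
        simp only [star_sub]; noncomm_ring
      rw [this, map_add, map_add, map_add, e1, e2]; simp
    rw [h1, Complex.add_re]
    have := h.pos _ (sub_mem hy (hS (hE y)))
    linarith
  have hcl : IsClosed (S : Set A) := fd_closed S
  let _ : CStarAlgebra S := StarSubalgebra.cstarAlgebra S
  have hcl0 : IsClosed (S0 : Set A) := fd_closed S0
  let _ : CStarAlgebra S0 := StarSubalgebra.cstarAlgebra S0
  have hbd : ∀ x ∈ S, ∀ a ∈ S, (τ (star (x * a) * (x * a))).re ≤ ‖x‖ ^ 2 * (τ (star a * a)).re := by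
    intro x hx a ha
    obtain ⟨w, hw⟩ := norm_sub_eq_star_mul (D := S) ⟨x, hx⟩
    have hw' : ((‖x‖ ^ 2 : ℝ) : ℂ) • (1 : A) - star x * x = star (w : A) * w :=
      congrArg Subtype.val hw
    have := h.pos (w * a) (mul_mem w.2 ha)
    rw [star_mul, show star a * star (w : A) * (w * a) = star a * (star (w : A) * w) * a by
      simp only [mul_assoc], ← hw', mul_sub, sub_mul, map_sub, Complex.sub_re,
      mul_smul_comm, smul_mul_assoc, mul_one, map_smul, smul_eq_mul, Complex.re_ofReal_mul] at this
    rw [star_mul, show star a * star x * (x * a) = star a * (star x * x) * a by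
      simp only [mul_assoc]]
    linarith
  refine ⟨E, hE, rep, fun x hx => ?_⟩
  by_cases hx0 : E x = 0
  · rw [hx0, norm_zero]; exact norm_nonneg x
  let y : S0 := ⟨E x, hE x⟩
  have hy0 : y ≠ 0 := fun h => hx0 (congrArg Subtype.val h)
  have : Nontrivial S0 := ⟨⟨y, 0, hy0⟩⟩
  have hspec : ‖star y * y‖ ∈ spectrum ℝ (star y * y) := by
    let _ : PartialOrder S0 := CStarAlgebra.spectralOrder S0
    let _ : StarOrderedRing S0 := CStarAlgebra.spectralOrderedRing S0
    exact CStarAlgebra.norm_mem_spectrum_of_nonneg (star_mul_self_nonneg y)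
  obtain ⟨a, ha, hya⟩ := fd_eigen hspec
  have ha' : (a : A) ≠ 0 := fun h => ha (Subtype.ext h)
  have hya' : star (E x) * E x * (a : A) = ((‖E x‖ ^ 2 : ℝ) : ℂ) • (a : A) := by
    have h1 := congrArg Subtype.val hya
    rw [CStarRing.norm_star_mul_self, ← pow_two] at h1
    rw [Complex.coe_smul]
    exact h1
  have h1 := hcontr (x * a) (mul_mem hx (hS a.2))
  rw [hmod x hx a a.2] at h1
  have h2 := h1.trans (hbd x hx a (hS a.2))
  rw [star_mul, show star (a : A) * star (E x) * (E x * a) = star (a : A) * (star (E x) * E x * a) by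
      simp only [mul_assoc], hya', mul_smul_comm, map_smul, smul_eq_mul,
      Complex.re_ofReal_mul] at h2
  have h3 : 0 < (τ (star (a : A) * a)).re := by
    refine lt_of_le_of_ne (h.pos a (hS a.2)) fun h0 => ha' (h.faith a (hS a.2) ?_)
    have him : (τ (star (a : A) * a)).im = 0 := by
      have := h.st _ (mul_mem (star_mem (hS a.2)) (hS a.2))
      rw [star_mul, star_star] at this
      have := congrArg Complex.im this
      simp at this
      linarith
    exact Complex.ext h0.symm him
  have h4 := le_of_mul_le_mul_right h2 h3
  exact abs_le_of_sq_le_sq' h4 (norm_nonneg x) |>.2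

end TraceSec

section BSide
variable {B : Type*} [CStarAlgebra B]

/-- nonzero projection -/
structure NP (p : B) : Prop where
  sa : star p = p
  idem : p * p = p
  ne : p ≠ 0

theorem sub_spectral_proj (S : StarSubalgebra ℂ B) [FiniteDimensional ℂ S] {h : B} (hS : h ∈ S)
    (hsa : star h = h) (h0 : h ≠ 0) :
    ∃ μ : ℝ, μ ≠ 0 ∧ ∃ p ∈ S, NP p ∧ h * p = μ • p ∧ p * h = μ • p := by
  have hcl : IsClosed (S : Set B) := fd_closed S
  let _ : CStarAlgebra S := StarSubalgebra.cstarAlgebra S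
  obtain ⟨μ, hμ, p, h1, h2, h3, h4, h5⟩ := fd_spectral_proj (D := S) (h := ⟨h, hS⟩)
    (Subtype.ext hsa) (fun h => h0 (congrArg Subtype.val h))
  refine ⟨μ, hμ, p, p.2, ⟨congrArg Subtype.val h1, congrArg Subtype.val h2,
    fun h => h3 (Subtype.ext h)⟩, congrArg Subtype.val h4, congrArg Subtype.val h5⟩

theorem proper_sub (S : StarSubalgebra ℂ B) [FiniteDimensional ℂ S] {e b : B} (heS : e ∈ S)
    (he : NP e) (hb : b ∈ S) (h : ∀ c : ℂ, e * b * e ≠ c • e) :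
    ∃ p ∈ S, NP p ∧ e * p = p ∧ p * e = p ∧ p ≠ e := by
  obtain ⟨k, hkS, hk, hke⟩ : ∃ k ∈ S, star k = k ∧ ∀ c : ℂ, e * k * e ≠ c • e := by
    by_contra! H
    obtain ⟨c1, h1⟩ := H (b + star b) (add_mem hb (star_mem hb)) (by simp [add_comm])
    obtain ⟨c2, h2⟩ := H (Complex.I • (b - star b))
      (SMulMemClass.smul_mem _ (sub_mem hb (star_mem hb))) (by simp [← smul_neg])
    apply h ((1 / 2 : ℂ) * (c1 - Complex.I * c2))
    rw [mul_smul, sub_smul, mul_smul, ← h1, ← h2]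
    simp only [mul_smul_comm, smul_mul_assoc, mul_add, mul_sub, add_mul, sub_mul, smul_smul,
      smul_sub, smul_add]
    rw [Complex.I_mul_I]
    module
  have hk' : star (e * k * e) = e * k * e := by simp [he.sa, hk, mul_assoc]
  obtain ⟨μ, hμ, p, hpS, hp, h1, h2⟩ := sub_spectral_proj S (mul_mem (mul_mem heS hkS) heS) hk'
    (fun h0 => hke 0 (by rw [h0, zero_smul]))
  have hp1 : p = μ⁻¹ • (e * k * e * p) := by rw [h1, smul_smul, inv_mul_cancel₀ hμ, one_smul]
  have hp2 : e * p = p := by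
    conv_lhs => rw [hp1]
    conv_rhs => rw [hp1]
    rw [mul_smul_comm]
    simp only [← mul_assoc, he.idem]
  have hp3 : p * e = p := by
    have := congrArg star hp2
    rwa [star_mul, hp.sa, he.sa] at this
  refine ⟨p, hpS, hp, hp2, hp3, fun hpe => hke (μ : ℂ) ?_⟩
  rw [hpe, mul_assoc, mul_assoc, he.idem, ← mul_assoc] at h1
  rw [h1]; simp

theorem exists_minimal (S : StarSubalgebra ℂ B) [FiniteDimensional ℂ S] {e : B} (heS : e ∈ S)
    (he : NP e) : ∃ p ∈ S, NP p ∧ e * p = p ∧ ∀ b ∈ S, ∃ c : ℂ, p * b * p = c • p := by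
  let T : Submodule ℂ B := Subalgebra.toSubmodule S.toSubalgebra
  have : FiniteDimensional ℂ T := inferInstanceAs (FiniteDimensional ℂ S)
  let M : B → Submodule ℂ B := fun p =>
    T.map ((LinearMap.mulRight ℂ p) ∘ₗ (LinearMap.mulLeft ℂ p))
  have hM : ∀ p x, x ∈ M p ↔ ∃ y ∈ S, p * y * p = x := by
    intro p x
    simp only [M, Submodule.mem_map]
    rfl
  obtain ⟨p, ⟨hpS, hp, hep⟩, hmin⟩ := (WellFounded.has_min
    (measure fun p : B => Module.finrank ℂ (M p)).wf
    {p | p ∈ S ∧ NP p ∧ e * p = p} ⟨e, heS, he, he.idem⟩)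
  refine ⟨p, hpS, hp, hep, ?_⟩
  by_contra! H
  obtain ⟨b, hb, hc⟩ := H
  obtain ⟨q, hqS, hq, h1, h2, h3⟩ := proper_sub S hpS hp hb hc
  refine hmin q ⟨hqS, hq, by rw [← h1, ← mul_assoc, hep]⟩ ?_
  refine Submodule.finrank_lt_finrank_of_lt (lt_of_le_of_ne ?_ ?_)
  · intro x hx
    obtain ⟨y, hy, rfl⟩ := (hM _ _).1 hx
    refine (hM _ _).2 ⟨q * y * q, mul_mem (mul_mem hqS hy) hqS, ?_⟩
    rw [← mul_assoc, ← mul_assoc, h1, mul_assoc _ q p, h2]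
  · intro heq
    have : p ∈ M p := (hM _ _).2 ⟨1, one_mem S, by rw [mul_one, hp.idem]⟩
    rw [← heq] at this
    obtain ⟨y, hy, hyp⟩ := (hM _ _).1 this
    apply h3
    have : q * p = p := by
      rw [← hyp, ← mul_assoc, ← mul_assoc, hq.idem]
    rw [← this, h2]

variable {F : ℕ → StarSubalgebra ℂ B}

theorem dense_ne (hF : UAF B F) (n : ℕ) {f : B → B} (hf : Continuous f) {b : B} (hb : f b ≠ 0) :
    ∃ N ≥ n, ∃ c ∈ F N, f c ≠ 0 := by
  obtain ⟨c, hc, hcF⟩ := hF.dense.inter_open_nonempty {b | f b ≠ 0}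
    (isOpen_ne.preimage hf) ⟨b, hb⟩
  obtain ⟨k, hk⟩ := Set.mem_iUnion.1 hcF
  exact ⟨max n k, le_max_left _ _, c, hF.mono (le_max_right _ _) hk, hc⟩

theorem two_sub (hF : UAF B F) (hs : IsSimpleCStarAlgebra B) (hinf : ¬ FiniteDimensional ℂ B)
    {n : ℕ} {e : B} (heF : e ∈ F n) (he : NP e) :
    ∃ N ≥ n, ∃ q ∈ F N, ∃ v ∈ F N, NP q ∧ e * q = q ∧ e * v = v ∧ v * q = v ∧ star v * v = q ∧
      q * v = 0 := by
  obtain ⟨N, hN, b, hb, hc⟩ : ∃ N ≥ n, ∃ b ∈ F N, ∀ c : ℂ, e * b * e ≠ c • e := by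
    by_contra! H
    apply hinf
    apply simple_fd hs he.ne
    have hcl : IsClosed {b : B | e * b * e ∈ Submodule.span ℂ {e}} :=
      (Submodule.closed_of_finiteDimensional (Submodule.span ℂ {e})).preimage (by fun_prop)
    have huniv : {b : B | e * b * e ∈ Submodule.span ℂ {e}} = Set.univ := by
      rw [← Set.univ_subset_iff, ← hF.dense.closure_eq]
      refine hcl.closure_subset_iff.2 fun b hb => ?_
      obtain ⟨k, hk⟩ := Set.mem_iUnion.1 hb
      obtain ⟨c, hc⟩ := H (max n k) (le_max_left _ _) b (hF.mono (le_max_right _ _) hk)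
      exact Submodule.mem_span_singleton.2 ⟨c, hc.symm⟩
    intro b
    have : b ∈ {b : B | e * b * e ∈ Submodule.span ℂ {e}} := huniv ▸ Set.mem_univ b
    obtain ⟨c, hc⟩ := Submodule.mem_span_singleton.1 this
    exact ⟨c, hc.symm⟩
  have := hF.fd N
  obtain ⟨p, hpF, hp, h1, h2, h3⟩ := proper_sub (F N) (hF.mono hN heF) he hb hc
  obtain ⟨b', hb'⟩ := simple_mul_ne hs (e := e - p) (p := p) (sub_ne_zero.2 h3.symm) hp.ne
  obtain ⟨M, hM, c, hcF, hc0⟩ := dense_ne hF N (f := fun b => (e - p) * b * p) (by fun_prop) hb'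
  set x := (e - p) * c * p with hx
  have hxF : x ∈ F M := mul_mem (mul_mem (sub_mem (hF.mono (hN.trans hM) heF) (hF.mono hM hpF)) hcF)
    (hF.mono hM hpF)
  have := hF.fd M
  obtain ⟨μ, hμ, q, hqF, hq, hq1, hq2⟩ := sub_spectral_proj (F M) (h := star x * x)
    (mul_mem (star_mem hxF) hxF) (by simp) (by
      intro h0; exact hc0 (CStarRing.star_mul_self_eq_zero_iff x |>.1 h0))
  have hpx : p * star x = star x := by
    rw [hx, star_mul, hp.sa, ← mul_assoc, hp.idem]
  have hq3 : q = μ⁻¹ • (star x * x * q) := by rw [hq1, smul_smul, inv_mul_cancel₀ hμ, one_smul]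
  have hq4 : p * q = q := by
    conv_lhs => rw [hq3]
    conv_rhs => rw [hq3]
    rw [mul_smul_comm]
    simp only [← mul_assoc, hpx]
  have hq5 : q * p = q := by
    have := congrArg star hq4
    rwa [star_mul, hp.sa, hq.sa] at this
  have hxq : star (x * q) * (x * q) = μ • q := by
    rw [star_mul, hq.sa, mul_assoc, ← mul_assoc (star x), hq1, mul_smul_comm, hq.idem]
  have hμ0 : 0 < μ := by
    let _ : PartialOrder B := CStarAlgebra.spectralOrder B
    let _ : StarOrderedRing B := CStarAlgebra.spectralOrderedRing B
    by_contra hneg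
    have a1 : 0 ≤ μ • q := hxq ▸ star_mul_self_nonneg (x * q)
    have a2 : 0 ≤ q := by
      have := star_mul_self_nonneg q
      rwa [hq.sa, hq.idem] at this
    have a3 : 0 ≤ (-μ) • q := smul_nonneg (by linarith) a2
    rw [neg_smul, neg_nonneg] at a3
    have := le_antisymm a3 a1
    rcases smul_eq_zero.1 this with h | h
    · exact hμ h
    · exact hq.ne h
  have hex : e * x = x := by
    rw [hx, ← mul_assoc, ← mul_assoc, mul_sub, he.idem, h1]
  have hqx : q * x = 0 := by
    rw [hx, ← mul_assoc, ← mul_assoc, mul_sub, ← hq5, mul_assoc q p e, h2, mul_assoc q p p, hp.idem,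
      sub_self, zero_mul, zero_mul]
  refine ⟨M, hN.trans hM, q, hqF, ((Real.sqrt μ)⁻¹ : ℂ) • (x * q),
    SMulMemClass.smul_mem _ (mul_mem hxF hqF), hq, ?_, ?_, ?_, ?_, ?_⟩
  · rw [← hq4, ← mul_assoc, h1]
  · rw [mul_smul_comm, ← mul_assoc, hex]
  · rw [smul_mul_assoc, mul_assoc, hq.idem]
  · rw [star_smul, smul_mul_smul_comm, hxq, ← Complex.coe_smul, smul_smul]
    have : (star ((Real.sqrt μ)⁻¹ : ℂ) * ((Real.sqrt μ)⁻¹ : ℂ) * (μ : ℂ)) = 1 := by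
      have h4 : (Real.sqrt μ : ℂ) * (Real.sqrt μ : ℂ) = μ := by
        rw [← Complex.ofReal_mul, Real.mul_self_sqrt hμ0.le]
      have h5 : (Real.sqrt μ : ℂ) ≠ 0 := by
        simpa using (Real.sqrt_pos.2 hμ0).ne'
      simp only [star_inv₀, RCLike.star_def, Complex.conj_ofReal]
      rw [← h4]
      field_simp
    rw [this, one_smul]
  · rw [mul_smul_comm, ← mul_assoc, hqx, zero_mul, smul_zero]

theorem many_sub (hF : UAF B F) (hs : IsSimpleCStarAlgebra B) (hinf : ¬ FiniteDimensional ℂ B)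
    {n : ℕ} {e : B} (heF : e ∈ F n) (he : NP e) (L : ℕ) :
    ∃ N ≥ n, ∃ q ∈ F N, NP q ∧ ∃ f : ℕ → B, (∀ i ≤ L, f i ∈ F N ∧ e * f i = f i ∧ f i * q = f i) ∧
      ∀ i ≤ L, ∀ j ≤ L, star (f i) * f j = if i = j then q else 0 := by
  induction L with
  | zero =>
    refine ⟨n, le_rfl, e, heF, he, fun _ => e, fun i _ => ⟨heF, he.idem, he.idem⟩, ?_⟩
    intro i hi j hj
    rw [Nat.le_zero.1 hi, Nat.le_zero.1 hj, if_pos rfl, he.sa, he.idem]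
  | succ L ih =>
    obtain ⟨N, hN, q, hqF, hq, f, hf, hff⟩ := ih
    obtain ⟨M, hM, r, hrF, v, hvF, hr, h1, h2, h3, h4, h5⟩ := two_sub hF hs hinf hqF hq
    have h6 : star v * r = 0 := by
      have := congrArg star h5
      rwa [star_mul, hr.sa, star_zero] at this
    refine ⟨M, hN.trans hM, r, hrF, hr, fun i => if i ≤ L then f i * r else f 0 * v, ?_, ?_⟩
    · intro i hi
      dsimp only
      split_ifs with h
      · obtain ⟨a1, a2, a3⟩ := hf i h
        exact ⟨mul_mem (hF.mono hM a1) hrF, by rw [← mul_assoc, a2], by rw [mul_assoc, hr.idem]⟩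
      · obtain ⟨a1, a2, a3⟩ := hf 0 (Nat.zero_le _)
        exact ⟨mul_mem (hF.mono hM a1) hvF, by rw [← mul_assoc, a2], by rw [mul_assoc, h3]⟩
    · have key : ∀ i ≤ L, ∀ j ≤ L, ∀ a b : B, star (f i * a) * (f j * b) =
          if i = j then star a * (q * b) else 0 := by
        intro i hi j hj a b
        rw [star_mul, mul_assoc, ← mul_assoc (star (f i)), hff i hi j hj]
        split_ifs <;> simp
      intro i hi j hj
      dsimp only
      by_cases hi' : i ≤ L <;> by_cases hj' : j ≤ L
      · rw [if_pos hi', if_pos hj', key i hi' j hj', h1, hr.sa, hr.idem]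
      · rw [if_pos hi', if_neg hj', key i hi' 0 (Nat.zero_le _), h2, hr.sa, h5, ite_self,
          if_neg (by omega)]
      · rw [if_neg hi', if_pos hj', key 0 (Nat.zero_le _) j hj', h1, h6, ite_self,
          if_neg (by omega)]
      · rw [if_neg hi', if_neg hj', key 0 (Nat.zero_le _) 0 (Nat.zero_le _), h2, h4, if_pos rfl,
          if_pos (by omega)]

theorem lemmaS (hF : UAF B F) (hs : IsSimpleCStarAlgebra B) (hinf : ¬ FiniteDimensional ℂ B)
    {n : ℕ} {e : B} (heF : e ∈ F n) (he : NP e) (L : ℕ) :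
    ∃ N ≥ n, ∃ q ∈ F N, NP q ∧ (∀ b ∈ F N, ∃ c : ℂ, q * b * q = c • q) ∧
      ∃ f : Fin L → B, (∀ i, f i ∈ F N) ∧ (∀ i, e * f i = f i) ∧ (∀ i, f i * q = f i) ∧
      ∀ i j, star (f i) * f j = if i = j then q else 0 := by
  obtain ⟨N, hN, q, hqF, hq, f, hf, hff⟩ := many_sub hF hs hinf heF he L
  have := hF.fd N
  obtain ⟨p, hpF, hp, hqp, hmin⟩ := exists_minimal (F N) hqF hq
  refine ⟨N, hN, p, hpF, hp, hmin, fun i => f i * p, fun i => ?_, fun i => ?_, fun i => ?_,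
    fun i j => ?_⟩
  · exact mul_mem (hf i i.2.le).1 hpF
  · rw [← mul_assoc, (hf i i.2.le).2.1]
  · rw [mul_assoc, hp.idem]
  · rw [star_mul, mul_assoc, ← mul_assoc (star (f i)), hff i i.2.le j j.2.le]
    simp only [Fin.val_inj]
    split_ifs
    · rw [hqp, hp.sa, hp.idem]
    · simp
end BSide

section Step
variable {A : Type*} [CStarAlgebra A] {B : Type*} [CStarAlgebra B]

structure Sys (F : ℕ → StarSubalgebra ℂ B) (N : ℕ) (e : B) (d : ℕ) (u : Fin d → B) : Prop where
  eF : e ∈ F N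
  np : NP e
  min : ∀ b ∈ F N, ∃ c : ℂ, e * b * e = c • e
  uF : ∀ i, u i ∈ F N
  uu : ∀ i j, star (u i) * u j = if i = j then e else 0
  ue : ∀ i, u i * e = u i

noncomputable def sMap (τ : A →ₗ[ℂ] ℂ) {d : ℕ} (m : Fin d → A) (u : Fin d → B) : A →ₗ[ℂ] B where
  toFun a := ∑ i, ∑ j, τ (star (m i) * (a * m j)) • (u i * star (u j))
  map_add' a b := by
    simp only [add_mul, mul_add, map_add, add_smul, Finset.sum_add_distrib]
  map_smul' r a := by
    simp only [smul_mul_assoc, mul_smul_comm, map_smul, smul_eq_mul, mul_smul, Finset.smul_sum,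
      RingHom.id_apply]

theorem sMap_apply (τ : A →ₗ[ℂ] ℂ) {d : ℕ} (m : Fin d → A) (u : Fin d → B) (a : A) :
    sMap τ m u a = ∑ i, ∑ j, τ (star (m i) * (a * m j)) • (u i * star (u j)) := rfl

variable {S : StarSubalgebra ℂ A} {τ : A →ₗ[ℂ] ℂ} {d : ℕ} {m : Fin d → A}

theorem TraceData.pars (h : TraceData S τ d m) {x : A} (hx : x ∈ S) (y : A) :
    ∑ l, τ (y * m l) * τ (star (m l) * x) = τ (y * x) := by
  conv_rhs => rw [← h.rep x hx]
  rw [Finset.mul_sum, map_sum]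
  refine Finset.sum_congr rfl fun l _ => ?_
  rw [mul_smul_comm, map_smul, smul_eq_mul, mul_comm]

variable {F : ℕ → StarSubalgebra ℂ B} {N : ℕ} {e : B} {u : Fin d → B}

theorem Sys.eu (hu : Sys F N e d u) (i : Fin d) : e * star (u i) = star (u i) := by
  have := congrArg star (hu.ue i)
  rwa [star_mul, hu.np.sa] at this

theorem sMap_mem (hu : Sys F N e d u) (a : A) : sMap τ m u a ∈ F N := by
  rw [sMap_apply]
  exact sum_mem fun i _ => sum_mem fun j _ =>
    SMulMemClass.smul_mem _ (mul_mem (hu.uF i) (star_mem (hu.uF j)))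

theorem star_u_sMap (hu : Sys F N e d u) (a : A) (i : Fin d) :
    star (u i) * sMap τ m u a = ∑ j, τ (star (m i) * (a * m j)) • star (u j) := by
  rw [sMap_apply, Finset.mul_sum, Finset.sum_eq_single i]
  · rw [Finset.mul_sum]
    refine Finset.sum_congr rfl fun j _ => ?_
    rw [mul_smul_comm, ← mul_assoc (star (u i)), hu.uu, if_pos rfl, hu.eu]
  · intro k _ hk
    rw [Finset.mul_sum]
    refine Finset.sum_eq_zero fun j _ => ?_
    rw [mul_smul_comm, ← mul_assoc (star (u i)), hu.uu, if_neg hk.symm, zero_mul, smul_zero]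
  · simp

theorem star_u_sMap_u (hu : Sys F N e d u) (a : A) (i j : Fin d) :
    star (u i) * sMap τ m u a * u j = τ (star (m i) * (a * m j)) • e := by
  rw [star_u_sMap hu, Finset.sum_mul, Finset.sum_eq_single j]
  · rw [smul_mul_assoc, hu.uu, if_pos rfl]
  · intro k _ hk
    rw [smul_mul_assoc, hu.uu, if_neg hk, smul_zero]
  · simp

theorem sMap_mul (h : TraceData S τ d m) (hu : Sys F N e d u) {b : A} (hb : b ∈ S) (a : A) :
    sMap τ m u (a * b) = sMap τ m u a * sMap τ m u b := by
  rw [sMap_apply τ m u a, Finset.sum_mul, sMap_apply]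
  refine Finset.sum_congr rfl fun i _ => ?_
  rw [Finset.sum_mul]
  have : ∀ j, (τ (star (m i) * (a * m j)) • (u i * star (u j))) * sMap τ m u b =
      ∑ l, (τ (star (m i) * a * m j) * τ (star (m j) * (b * m l))) • (u i * star (u l)) := by
    intro j
    rw [smul_mul_assoc, mul_assoc, star_u_sMap hu, Finset.mul_sum, Finset.smul_sum]
    refine Finset.sum_congr rfl fun l _ => ?_
    rw [mul_smul_comm, smul_smul, ← mul_assoc (star (m i))]
  rw [Finset.sum_congr rfl fun j _ => this j, Finset.sum_comm]
  refine Finset.sum_congr rfl fun l _ => ?_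
  rw [← Finset.sum_smul, h.pars (mul_mem hb (h.mem l))]
  simp only [mul_assoc]

theorem sMap_star (h : TraceData S τ d m) {a : A} (ha : a ∈ S) :
    sMap τ m u (star a) = star (sMap τ m u a) := by
  rw [sMap_apply, sMap_apply, star_sum, Finset.sum_comm]
  refine Finset.sum_congr rfl fun i _ => ?_
  rw [star_sum]
  refine Finset.sum_congr rfl fun j _ => ?_
  rw [star_smul, ← h.st _ (mul_mem (star_mem (h.mem _)) (mul_mem ha (h.mem _)))]
  simp [mul_assoc]

theorem sMap_inj (h : TraceData S τ d m) (hu : Sys F N e d u) {a : A} (ha : a ∈ S)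
    (h0 : sMap τ m u a = 0) : a = 0 := by
  have h1 : ∀ i j, τ (star (m i) * (a * m j)) = 0 := by
    intro i j
    have := star_u_sMap_u (τ := τ) (m := m) hu a i j
    rw [h0, mul_zero, zero_mul] at this
    exact (smul_eq_zero.1 this.symm).resolve_right hu.np.ne
  have h2 : ∀ j, a * m j = 0 := by
    intro j
    rw [← h.rep (a * m j) (mul_mem ha (h.mem j))]
    exact Finset.sum_eq_zero fun i _ => by rw [h1, zero_smul]
  rw [← mul_one a, ← h.sum, Finset.mul_sum]
  exact Finset.sum_eq_zero fun i _ => by rw [← mul_assoc, h2, zero_mul]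

theorem sMap_norm [FiniteDimensional ℂ S] (h : TraceData S τ d m) (hu : Sys F N e d u) {a : A}
    (ha : a ∈ S) : ‖sMap τ m u a‖ = ‖a‖ := by
  have hcl : IsClosed (S : Set A) := fd_closed S
  let _ : CStarAlgebra S := StarSubalgebra.cstarAlgebra S
  let φ : S →⋆ₙₐ[ℂ] B :=
    { toFun := fun x => sMap τ m u x
      map_smul' := fun r x => by simp
      map_zero' := by simp
      map_add' := fun x y => by simp
      map_mul' := fun x y => sMap_mul h hu y.2 x
      map_star' := fun x => sMap_star h x.2 }
  have hφ : Function.Injective φ := by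
    rw [injective_iff_map_eq_zero]
    intro x hx
    exact Subtype.ext (sMap_inj h hu x.2 hx)
  exact NonUnitalStarAlgHom.norm_map φ hφ ⟨a, ha⟩

theorem sMap_one (h : TraceData S τ d m) : sMap τ m u 1 = ∑ i, u i * star (u i) := by
  rw [sMap_apply]
  refine Finset.sum_congr rfl fun i _ => ?_
  simp [h.orth]

theorem sys_step (hF : UAF B F) (hs : IsSimpleCStarAlgebra B) (hinf : ¬ FiniteDimensional ℂ B)
    (h : TraceData S τ d m) (hu : Sys F N e d u) {S' : StarSubalgebra ℂ A} (hS : S ≤ S')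
    {τ' : A →ₗ[ℂ] ℂ} {d' : ℕ} {n : Fin d' → A} (h' : TraceData S' τ' d' n) :
    ∃ (N' : ℕ) (e' : B) (u' : Fin d' → B), N + 1 ≤ N' ∧ Sys F N' e' d' u' ∧
      (∀ b ∈ F N, ∃ z ∈ S, sMap τ' n u' 1 * b * sMap τ' n u' 1 = sMap τ' n u' z) ∧
      ∀ a ∈ S, sMap τ' n u' 1 * sMap τ m u a * sMap τ' n u' 1 = sMap τ' n u' a := by
  obtain ⟨N', hN', q, hqF, hq, hmin, f, hfF, hef, hfq, hff⟩ :=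
    lemmaS hF hs hinf (hF.mono (Nat.le_succ N) hu.eF) hu.np d'
  have hNN' : N ≤ N' := (Nat.le_succ N).trans hN'
  obtain ⟨W, hW⟩ : ∃ W : Fin d → Fin d' → B,
    ∀ i p, W i p = ∑ l, τ' (star (m i) * n p * n l) • f l := ⟨_, fun _ _ => rfl⟩
  have hWF : ∀ i p, W i p ∈ F N' := fun i p => by
    rw [hW]
    exact sum_mem fun l _ => SMulMemClass.smul_mem _ (hfF l)
  have heW : ∀ i p, e * W i p = W i p := by
    intro i p
    rw [hW, Finset.mul_sum]
    exact Finset.sum_congr rfl fun l _ => by rw [mul_smul_comm, hef]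
  have hWq : ∀ i p, W i p * q = W i p := by
    intro i p
    rw [hW, Finset.sum_mul]
    exact Finset.sum_congr rfl fun l _ => by rw [smul_mul_assoc, hfq]
  have hmS : ∀ i, m i ∈ S' := fun i => hS (h.mem i)
  have hWW : ∀ i j p r, star (W i p) * W j r = τ' (star (n p) * (m i * star (m j) * n r)) • q := by
    intro i j p r
    rw [hW, hW, star_sum, Finset.sum_mul]
    have h1 : ∀ l, star (τ' (star (m i) * n p * n l) • f l) *
        ∑ k, τ' (star (m j) * n r * n k) • f k =
        (τ' (star (m j) * n r * n l) * τ' (star (n l) * (star (n p) * m i))) • q := by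
      intro l
      rw [Finset.mul_sum, Finset.sum_eq_single l]
      · rw [star_smul, smul_mul_smul_comm, hff, if_pos rfl, ← h'.st _ (mul_mem (mul_mem
          (star_mem (hmS i)) (h'.mem p)) (h'.mem l)), mul_comm]
        simp [mul_assoc]
      · intro k _ hk
        rw [star_smul, smul_mul_smul_comm, hff, if_neg hk.symm, smul_zero]
      · simp
    rw [Finset.sum_congr rfl fun l _ => h1 l, ← Finset.sum_smul,
      h'.pars (mul_mem (star_mem (h'.mem p)) (hmS i)),
      h'.tr _ (mul_mem (star_mem (hmS j)) (h'.mem r)) _ (mul_mem (star_mem (h'.mem p)) (hmS i))]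
    simp only [mul_assoc]
  obtain ⟨u', hu'⟩ : ∃ u' : Fin d' → B, ∀ p, u' p = ∑ i, u i * W i p := ⟨_, fun _ => rfl⟩
  have key : ∀ (b : B) (β : Fin d → Fin d → ℂ), (∀ i j, star (u i) * b * u j = β i j • e) →
      ∀ p r, star (u' p) * b * u' r =
        τ' (star (n p) * ((∑ i, ∑ j, β i j • (m i * star (m j))) * n r)) • q := by
    intro b β hβ p r
    rw [hu', hu', star_sum, Finset.sum_mul, Finset.sum_mul, Finset.sum_mul, Finset.mul_sum, map_sum,
      Finset.sum_smul]
    refine Finset.sum_congr rfl fun i _ => ?_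
    rw [Finset.sum_mul (f := fun j => β i j • (m i * star (m j))), Finset.mul_sum,
      Finset.mul_sum, map_sum, Finset.sum_smul]
    refine Finset.sum_congr rfl fun j _ => ?_
    calc star (u i * W i p) * b * (u j * W j r)
        = star (W i p) * ((star (u i) * b * u j) * W j r) := by
          rw [star_mul]; simp only [mul_assoc]
      _ = β i j • (star (W i p) * W j r) := by
          rw [hβ, smul_mul_assoc, heW, mul_smul_comm]
      _ = _ := by
          rw [hWW, smul_smul, smul_mul_assoc, mul_smul_comm, map_smul, smul_eq_mul]
  have hsys : Sys F N' q d' u' := by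
    refine ⟨hqF, hq, hmin, fun p => ?_, fun p r => ?_, fun p => ?_⟩
    · rw [hu']
      exact sum_mem fun i _ => mul_mem (hF.mono hNN' (hu.uF i)) (hWF i p)
    · have := key 1 (fun i j => if i = j then 1 else 0) (by
        intro i j
        rw [mul_one, hu.uu]
        split_ifs <;> simp) p r
      simp only [ite_smul, one_smul, zero_smul, Finset.sum_ite_eq, Finset.mem_univ, if_true, h.sum,
        one_mul, mul_one, h'.orth] at this
      exact this
    · rw [hu', Finset.sum_mul]
      exact Finset.sum_congr rfl fun i _ => by rw [mul_assoc, hWq]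
  have key2 : ∀ (b : B) (β : Fin d → Fin d → ℂ), (∀ i j, star (u i) * b * u j = β i j • e) →
      sMap τ' n u' 1 * b * sMap τ' n u' 1 =
        sMap τ' n u' (∑ i, ∑ j, β i j • (m i * star (m j))) := by
    intro b β hβ
    rw [sMap_one h', sMap_apply, Finset.sum_mul, Finset.sum_mul]
    refine Finset.sum_congr rfl fun p _ => ?_
    rw [Finset.mul_sum]
    refine Finset.sum_congr rfl fun r _ => ?_
    calc u' p * star (u' p) * b * (u' r * star (u' r))
        = u' p * ((star (u' p) * b * u' r) * star (u' r)) := by simp only [mul_assoc]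
      _ = _ := by rw [key b β hβ, smul_mul_assoc, hsys.eu, mul_smul_comm]
  refine ⟨N', q, u', hN', hsys, fun b hb => ?_, fun a ha => ?_⟩
  · have : ∀ i j, ∃ c : ℂ, star (u i) * b * u j = c • e := by
      intro i j
      obtain ⟨c, hc⟩ := hu.min _ (mul_mem (mul_mem (star_mem (hu.uF i)) hb) (hu.uF j))
      refine ⟨c, ?_⟩
      rw [← hc]
      simp only [mul_assoc, hu.ue]
      rw [← mul_assoc e, hu.eu]
    choose β hβ using this
    refine ⟨_, ?_, key2 b β hβ⟩
    exact sum_mem fun i _ => sum_mem fun j _ =>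
      SMulMemClass.smul_mem _ (mul_mem (h.mem i) (star_mem (h.mem j)))
  · rw [key2 _ _ (star_u_sMap_u hu a)]
    congr 1
    rw [Finset.sum_comm]
    have : ∀ j, ∑ i, τ (star (m i) * (a * m j)) • (m i * star (m j)) = a * (m j * star (m j)) := by
      intro j
      conv_rhs => rw [← mul_assoc, ← h.rep (a * m j) (mul_mem ha (h.mem j)), Finset.sum_mul]
      exact Finset.sum_congr rfl fun i _ => by rw [smul_mul_assoc]
    rw [Finset.sum_congr rfl fun j _ => this j, ← Finset.mul_sum, h.sum, mul_one]

theorem sys_init (hF : UAF B F) (hs : IsSimpleCStarAlgebra B) (hinf : ¬ FiniteDimensional ℂ B)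
    (d : ℕ) : ∃ (N : ℕ) (e : B) (u : Fin d → B), Sys F N e d u := by
  have h1 : (1 : B) ≠ 0 := by
    intro h
    apply hinf
    have : Subsingleton B := subsingleton_of_zero_eq_one h.symm
    infer_instance
  obtain ⟨N', hN', q, hqF, hq, hmin, f, hfF, hef, hfq, hff⟩ :=
    lemmaS hF hs hinf (n := 0) (one_mem _) ⟨star_one B, one_mul 1, h1⟩ d
  exact ⟨N', q, f, hqF, hq, hmin, hfF, hff, hfq⟩
end Step

section Glue
variable {V : Type*} [NormedAddCommGroup V] [NormedSpace ℂ V]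
  {W : Type*} [NormedAddCommGroup W] [NormedSpace ℂ W] [CompleteSpace W]

theorem glue (M : ℕ → Submodule ℂ V) (hM : Monotone M) (hd : Dense (⋃ n, (M n : Set V)))
    (g : ℕ → V →ₗ[ℂ] W) (hg : ∀ n, ∀ x ∈ M n, g (n + 1) x = g n x)
    (hn : ∀ n, ∀ x ∈ M n, ‖g n x‖ ≤ ‖x‖) :
    ∃ G : V →L[ℂ] W, ∀ n, ∀ x ∈ M n, G x = g n x := by
  have hg' : ∀ n k, n ≤ k → ∀ x ∈ M n, g k x = g n x := by
    intro n k hnk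
    induction k, hnk using Nat.le_induction with
    | base => intro x _; rfl
    | succ k hk ih => intro x hx; rw [hg k x (hM hk hx), ih x hx]
  let D : Submodule ℂ V := ⨆ n, M n
  have hD : ∀ x : D, ∃ n, (x : V) ∈ M n := fun x =>
    (Submodule.mem_iSup_of_directed M hM.directed_le).1 x.2
  choose ix hix using hD
  have hix' : ∀ (x : D) n, (x : V) ∈ M n → g (ix x) x = g n x := by
    intro x n hx
    rw [← hg' n (max n (ix x)) (le_max_left _ _) x hx,
      hg' (ix x) (max n (ix x)) (le_max_right _ _) x (hix x)]
  let f : D →ₗ[ℂ] W :=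
    { toFun := fun x => g (ix x) x
      map_add' := by
        intro x y
        have hx := hM (le_max_left (ix x) (ix y)) (hix x)
        have hy := hM (le_max_right (ix x) (ix y)) (hix y)
        rw [hix' x _ hx, hix' y _ hy, hix' (x + y) _ (add_mem hx hy)]
        simp
      map_smul' := by
        intro r x
        rw [hix' (r • x) (ix x) (Submodule.smul_mem _ r (hix x))]
        simp }
  have hdr : DenseRange (D.subtype) := by
    refine hd.mono ?_
    intro x hx
    obtain ⟨n, hn⟩ := Set.mem_iUnion.1 hx
    exact ⟨⟨x, Submodule.mem_iSup_of_mem n hn⟩, rfl⟩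
  refine ⟨f.extendOfNorm D.subtype, fun n x hx => ?_⟩
  have h1 := LinearMap.extendOfNorm_eq (f := f) (e := D.subtype) hdr
    ⟨1, fun x => by rw [one_mul]; exact hn _ _ (hix x)⟩ ⟨x, Submodule.mem_iSup_of_mem n hx⟩
  exact h1.trans (hix' ⟨x, Submodule.mem_iSup_of_mem n hx⟩ n hx)
end Glue

section Block
variable {B : Type*} [CStarAlgebra B]

theorem proj_norm {q : B} (h1 : star q = q) (h2 : q * q = q) : ‖q‖ ≤ 1 := by
  have := CStarRing.norm_star_mul_self (x := q)
  rw [h1, h2] at this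
  nlinarith [norm_nonneg q]

theorem block_norm {q y z : B} (h1 : star q = q) (h2 : q * q = q) (hy1 : q * y = 0)
    (hy2 : y * q = 0) (hz1 : q * z = z) (hz2 : z * q = z) {M : ℝ} (hy : ‖y‖ ≤ M) (hz : ‖z‖ ≤ M) :
    ‖y + z‖ ≤ M := by
  let _ : PartialOrder B := CStarAlgebra.spectralOrder B
  let _ : StarOrderedRing B := CStarAlgebra.spectralOrderedRing B
  have hM : 0 ≤ M := (norm_nonneg y).trans hy
  have key : ∀ (p x : B), star p = p → p * p = p → x * p = x → ‖x‖ ≤ M →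
      star x * x ≤ (M ^ 2) • p := by
    intro p x hp hpp hxp hx
    have h := CStarAlgebra.star_left_conjugate_le_norm_smul (a := p) (b := star x * x)
    rw [CStarRing.norm_star_mul_self] at h
    have e1 : star p * (star x * x) * p = star x * x := by
      rw [mul_assoc, mul_assoc, hxp, ← mul_assoc, ← star_mul, hxp]
    rw [e1, hp, hpp] at h
    refine h.trans ?_
    have hp0 : 0 ≤ p := by
      have := star_mul_self_nonneg p
      rwa [hp, hpp] at this
    exact smul_le_smul_of_nonneg_right (by nlinarith [norm_nonneg x]) hp0
  have a1 := key (1 - q) y (by simp [h1]) (by simp [mul_sub, sub_mul, h2]) (by simp [mul_sub, hy2])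
    hy
  have a2 := key q z h1 h2 hz2 hz
  have a3 : star (y + z) * (y + z) = star y * y + star z * z := by
    have b1 : star y * z = 0 := by
      rw [← hz1, ← mul_assoc]
      have := congrArg star hy1
      rw [star_mul, h1, star_zero] at this
      rw [this, zero_mul]
    have b2 : star z * y = 0 := by
      have := congrArg star b1
      rwa [star_mul, star_star, star_zero] at this
    rw [star_add, add_mul, mul_add, mul_add, b1, b2]; simp
  have a4 : star (y + z) * (y + z) ≤ algebraMap ℝ B (M ^ 2) := by
    rw [a3, Algebra.algebraMap_eq_smul_one]
    refine (add_le_add a1 a2).trans (le_of_eq ?_)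
    rw [← smul_add, sub_add_cancel]
  have a5 := (CStarAlgebra.norm_le_iff_le_algebraMap _ (by positivity)
    (star_mul_self_nonneg (y + z))).2 a4
  rw [CStarRing.norm_star_mul_self] at a5
  nlinarith [norm_nonneg (y + z)]
end Block

section Key
variable {A : Type*} [CStarAlgebra A] {B : Type*} [CStarAlgebra B]

/-- the approximately compatible system of embeddings -/
structure EmbSeq (S : ℕ → StarSubalgebra ℂ A) (F : ℕ → StarSubalgebra ℂ B) (N : ℕ → ℕ)
    (s : ℕ → A →ₗ[ℂ] B) : Prop where
  lt : ∀ k, N k + 1 ≤ N (k + 1)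
  mul : ∀ k a, ∀ b ∈ S k, s k (a * b) = s k a * s k b
  st : ∀ k, ∀ a ∈ S k, s k (star a) = star (s k a)
  norm : ∀ k, ∀ a ∈ S k, ‖s k a‖ = ‖a‖
  mem : ∀ k a, s k a ∈ F (N k)
  comp : ∀ k, ∀ b ∈ F (N k), ∃ z ∈ S k, s (k + 1) 1 * b * s (k + 1) 1 = s (k + 1) z
  ext : ∀ k, ∀ a ∈ S k, s (k + 1) 1 * s k a * s (k + 1) 1 = s (k + 1) a

theorem exists_embSeq {S : ℕ → StarSubalgebra ℂ A} {F : ℕ → StarSubalgebra ℂ B}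
    (hS : UAF A S) (hF : UAF B F) (hs : IsSimpleCStarAlgebra B) (hinf : ¬ FiniteDimensional ℂ B) :
    ∃ N s, EmbSeq S F N s := by
  have h0 : ∀ k, ∃ (τ : A →ₗ[ℂ] ℂ) (d : ℕ) (m : Fin d → A), TraceData (S k) τ d m := fun k =>
    have := hS.fd k
    exists_traceData (S k)
  choose τ d m htd using h0
  let Stage : ℕ → Type _ := fun k =>
    {x : ℕ × B × (Fin (d k) → B) // Sys F x.1 x.2.1 (d k) x.2.2}
  have hstep : ∀ k (x : Stage k), ∃ y : Stage (k + 1), x.1.1 + 1 ≤ y.1.1 ∧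
      (∀ b ∈ F x.1.1, ∃ z ∈ S k, sMap (τ (k + 1)) (m (k + 1)) y.1.2.2 1 * b *
        sMap (τ (k + 1)) (m (k + 1)) y.1.2.2 1 = sMap (τ (k + 1)) (m (k + 1)) y.1.2.2 z) ∧
      ∀ a ∈ S k, sMap (τ (k + 1)) (m (k + 1)) y.1.2.2 1 * sMap (τ k) (m k) x.1.2.2 a *
        sMap (τ (k + 1)) (m (k + 1)) y.1.2.2 1 = sMap (τ (k + 1)) (m (k + 1)) y.1.2.2 a := by
    intro k x
    obtain ⟨N', e', u', h1, h2, h3, h4⟩ := sys_step hF hs hinf (htd k) x.2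
      (hS.mono (Nat.le_succ k)) (htd (k + 1))
    exact ⟨⟨(N', e', u'), h2⟩, h1, h3, h4⟩
  choose nxt h1 h2 h3 using hstep
  obtain ⟨N0, e0, u0, h00⟩ := sys_init hF hs hinf (d 0)
  let stg : ∀ k, Stage k := fun k => Nat.rec ⟨(N0, e0, u0), h00⟩ (fun k x => nxt k x) k
  have hstg : ∀ k, stg (k + 1) = nxt k (stg k) := fun k => rfl
  refine ⟨fun k => (stg k).1.1, fun k => sMap (τ k) (m k) (stg k).1.2.2, ?_, ?_, ?_, ?_, ?_, ?_, ?_⟩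
  · intro k; exact h1 k (stg k)
  · intro k a b hb; exact sMap_mul (htd k) (stg k).2 hb a
  · intro k a ha; exact sMap_star (htd k) ha
  · intro k a ha
    have := hS.fd k
    exact sMap_norm (htd k) (stg k).2 ha
  · intro k a; exact sMap_mem (stg k).2 a
  · intro k; exact h2 k (stg k)
  · intro k; exact h3 k (stg k)

variable {S : ℕ → StarSubalgebra ℂ A} {F : ℕ → StarSubalgebra ℂ B} {N : ℕ → ℕ}
  {s : ℕ → A →ₗ[ℂ] B}

theorem EmbSeq.q_sa (h : EmbSeq S F N s) (k : ℕ) : star (s k 1) = s k 1 := by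
  rw [← h.st k 1 (one_mem _), star_one]

theorem EmbSeq.q_mul (h : EmbSeq S F N s) (k : ℕ) {a : A} (ha : a ∈ S k) :
    s k 1 * s k a = s k a := by
  rw [← h.mul k 1 a ha, one_mul]

theorem EmbSeq.mul_q (h : EmbSeq S F N s) (k : ℕ) (a : A) :
    s k a * s k 1 = s k a := by
  rw [← h.mul k a 1 (one_mem _), mul_one]

theorem EmbSeq.q_s (h : EmbSeq S F N s) (hS : Monotone S) (k : ℕ) {a : A} (ha : a ∈ S k) :
    s (k + 1) 1 * s k a = s (k + 1) a := by
  set q := s (k + 1) 1 with hq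
  have hqsa : star q = q := h.q_sa (k + 1)
  have ha' : a ∈ S (k + 1) := hS (Nat.le_succ k) ha
  have hqq : q * q = q := h.mul_q (k + 1) 1
  rw [← h.ext k a ha, ← hq, eq_comm, ← sub_eq_zero, ← CStarRing.mul_star_self_eq_zero_iff]
  have e1 := h.ext k (a * star a) (mul_mem ha (star_mem ha))
  have e2 := h.ext k a ha
  have e3 := h.ext k (star a) (star_mem ha)
  rw [← hq] at e1 e2 e3
  rw [h.mul k a _ (star_mem ha), h.mul (k + 1) a _ (star_mem ha'), ← e2, ← e3,
    h.st k a ha] at e1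
  rw [star_sub, star_mul, star_mul, hqsa]
  generalize s k a = t at *
  have e4 : q * t * q * (q * star t * q) = q * t * (q * (star t * q)) := by
    rw [mul_assoc (q * t) q, mul_assoc q (star t) q, ← mul_assoc q q, hqq]
  have e5 : q * t * q * (star t * q) = q * t * (q * (star t * q)) := by
    rw [mul_assoc (q * t) q]
  have e6 : q * t * q * (q * (star t * q)) = q * t * (q * (star t * q)) := by
    rw [mul_assoc (q * t) q, ← mul_assoc q q, hqq]
  have e7 : q * t * (star t * q) = q * (t * star t) * q := by simp only [mul_assoc]
  rw [sub_mul, mul_sub, mul_sub, e5, e6, e7, e1, e4]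
  simp

theorem EmbSeq.s_q (h : EmbSeq S F N s) (hS : Monotone S) (k : ℕ) {a : A} (ha : a ∈ S k) :
    s k a * s (k + 1) 1 = s (k + 1) a := by
  have := congrArg star (h.q_s hS k (star_mem ha))
  rwa [star_mul, h.q_sa, ← h.st k _ (star_mem ha),
    ← h.st (k + 1) _ (hS (Nat.le_succ k) (star_mem ha)), star_star] at this

theorem EmbSeq.exists_phi (h : EmbSeq S F N s) (hS : UAF A S) (hF : UAF B F) :
    ∃ φ : ℕ → A →ₗ[ℂ] B, (∀ n, ∀ a ∈ S n, φ (n + 1) a = φ n a) ∧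
      (∀ n, ∀ a ∈ S n, ‖φ n a‖ ≤ ‖a‖) ∧ (∀ n a, φ n a ∈ F (N n)) ∧
      ∀ n, ∀ a ∈ S n, s (n + 1) 1 * φ n a * s (n + 1) 1 = s (n + 1) a := by
  have hE : ∀ n, ∃ E : A →ₗ[ℂ] A, (∀ x, E x ∈ S n) ∧ (∀ x ∈ S n, E x = x) ∧
      ∀ x ∈ S (n + 1), ‖E x‖ ≤ ‖x‖ := fun n =>
    have := hS.fd n
    have := hS.fd (n + 1)
    exists_expectation (S n) (S (n + 1)) (hS.mono (Nat.le_succ n))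
  choose E hE1 hE2 hE3 using hE
  let φ : ℕ → A →ₗ[ℂ] B := fun n => Nat.rec (s 0)
    (fun n φ => (LinearMap.mulLeft ℂ (1 - s (n + 1) 1)) ∘ₗ φ ∘ₗ E n + s (n + 1)) n
  have hφ0 : φ 0 = s 0 := rfl
  have hφ1 : ∀ n a, φ (n + 1) a = (1 - s (n + 1) 1) * φ n (E n a) + s (n + 1) a :=
    fun n a => rfl
  clear_value φ
  have hone : ∀ n, (1 : A) ∈ S n := fun n => one_mem _
  have hinv : ∀ n, ∀ a ∈ S n, s n 1 * φ n a = s n a ∧ φ n a * s n 1 = s n a →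
      s (n + 1) 1 * φ n a = s (n + 1) a ∧ φ n a * s (n + 1) 1 = s (n + 1) a := by
    intro n a ha hh
    have hle := hS.mono (Nat.le_succ n)
    constructor
    · have : s (n + 1) 1 = s (n + 1) 1 * s n 1 := (h.q_s hS.mono n (hone n)).symm
      rw [this, mul_assoc, hh.1, h.q_s hS.mono n ha]
    · have : s (n + 1) 1 = s n 1 * s (n + 1) 1 := (h.s_q hS.mono n (hone n)).symm
      rw [this, ← mul_assoc, hh.2, h.s_q hS.mono n ha]
  have hmain : ∀ n, ∀ a ∈ S n, (s n 1 * φ n a = s n a ∧ φ n a * s n 1 = s n a) ∧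
      ‖φ n a‖ ≤ ‖a‖ := by
    intro n
    induction n with
    | zero =>
      intro a ha
      rw [hφ0]
      exact ⟨⟨h.q_mul 0 ha, h.mul_q 0 a⟩, (h.norm 0 a ha).le⟩
    | succ n ih =>
      intro a ha
      obtain ⟨i1, i2⟩ := ih (E n a) (hE1 n a)
      obtain ⟨i3, i4⟩ := hinv n _ (hE1 n a) i1
      have hqq : s (n + 1) 1 * s (n + 1) 1 = s (n + 1) 1 := h.mul_q (n + 1) 1
      have hEa : E n a ∈ S (n + 1) := hS.mono (Nat.le_succ n) (hE1 n a)
      have c1 : s (n + 1) 1 * ((1 - s (n + 1) 1) * φ n (E n a)) = 0 := by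
        rw [← mul_assoc, mul_sub, mul_one, hqq, sub_self, zero_mul]
      have c2 : ((1 - s (n + 1) 1) * φ n (E n a)) * s (n + 1) 1 = 0 := by
        rw [mul_assoc, i4, sub_mul, one_mul, h.q_mul (n + 1) hEa, sub_self]
      rw [hφ1]
      refine ⟨⟨?_, ?_⟩, ?_⟩
      · rw [mul_add, c1, zero_add, h.q_mul (n + 1) ha]
      · rw [add_mul, c2, zero_add, h.mul_q]
      · refine block_norm (h.q_sa (n + 1)) hqq c1 c2 (h.q_mul (n + 1) ha) (h.mul_q _ _) ?_
          (h.norm _ _ ha).le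
        have hp : ‖1 - s (n + 1) 1‖ ≤ 1 := proj_norm (by simp [h.q_sa]) (by simp [mul_sub, sub_mul, hqq])
        calc ‖(1 - s (n + 1) 1) * φ n (E n a)‖ ≤ ‖1 - s (n + 1) 1‖ * ‖φ n (E n a)‖ := norm_mul_le _ _
          _ ≤ 1 * ‖φ n (E n a)‖ := by gcongr
          _ = ‖φ n (E n a)‖ := one_mul _
          _ ≤ ‖E n a‖ := i2
          _ ≤ ‖a‖ := hE3 n a ha
  refine ⟨φ, fun n a ha => ?_, fun n a ha => (hmain n a ha).2, fun n => ?_, fun n a ha => ?_⟩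
  · rw [hφ1, hE2 n a ha, sub_mul, one_mul, (hinv n a ha (hmain n a ha).1).1, sub_add_cancel]
  · induction n with
    | zero => intro a; rw [hφ0]; exact h.mem 0 a
    | succ n ih =>
      intro a
      rw [hφ1]
      have hle : F (N n) ≤ F (N (n + 1)) := hF.mono ((Nat.le_succ _).trans (h.lt n))
      exact add_mem (mul_mem (sub_mem (one_mem _) (h.mem _ _)) (hle (ih _))) (h.mem _ _)
  · rw [(hinv n a ha (hmain n a ha).1).1, h.mul_q]

theorem EmbSeq.exists_R (h : EmbSeq S F N s) (hS : UAF A S) (hF : UAF B F) :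
    ∃ R : ℕ → B →ₗ[ℂ] A, (∀ n, ∀ b ∈ F (N n), R n b ∈ S n ∧
      s (n + 1) 1 * b * s (n + 1) 1 = s (n + 1) (R n b)) := by
  have : ∀ n, ∃ R : B →ₗ[ℂ] A, ∀ b ∈ F (N n), R b ∈ S n ∧
      s (n + 1) 1 * b * s (n + 1) 1 = s (n + 1) (R b) := by
    intro n
    have hc := h.comp n
    choose! r hr1 hr2 using hc
    have huniq : ∀ x ∈ S n, ∀ y ∈ S n, s (n + 1) x = s (n + 1) y → x = y := by
      intro x hx y hy hxy
      rw [← sub_eq_zero, ← norm_eq_zero,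
        ← h.norm (n + 1) _ (hS.mono (Nat.le_succ n) (sub_mem hx hy)), map_sub, hxy, sub_self,
        norm_zero]
    let f : (Subalgebra.toSubmodule (F (N n)).toSubalgebra) →ₗ[ℂ] A :=
      { toFun := fun b => r b
        map_add' := by
          intro x y
          refine huniq _ (hr1 _ (add_mem x.2 y.2)) _ (add_mem (hr1 _ x.2) (hr1 _ y.2)) ?_
          rw [map_add, ← hr2 _ x.2, ← hr2 _ y.2]
          refine (hr2 _ (add_mem x.2 y.2)).symm.trans ?_
          rw [mul_add, add_mul]
        map_smul' := by
          intro c x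
          have hx := SMulMemClass.smul_mem (S := StarSubalgebra ℂ B) (s := F (N n)) c x.2
          refine huniq _ (hr1 _ hx) _ (SMulMemClass.smul_mem c (hr1 _ x.2)) ?_
          rw [RingHom.id_apply, map_smul, ← hr2 _ x.2]
          refine (hr2 _ hx).symm.trans ?_
          rw [mul_smul_comm, smul_mul_assoc] }
    obtain ⟨R, hR⟩ := LinearMap.exists_extend f
    refine ⟨R, fun b hb => ?_⟩
    have : R b = r b := LinearMap.congr_fun hR ⟨b, hb⟩
    rw [this]
    exact ⟨hr1 b hb, hr2 b hb⟩
  choose R hR using this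
  exact ⟨R, hR⟩

theorem key_embedding (hS : UAF A S) (hF : UAF B F) (hs : IsSimpleCStarAlgebra B)
    (hinf : ¬ FiniteDimensional ℂ B) :
    ∃ (φ : A →L[ℂ] B) (ψ : B →L[ℂ] A), ∀ a, ψ (φ a) = a := by
  obtain ⟨N, s, h⟩ := exists_embSeq hS hF hs hinf
  obtain ⟨φ, p1, p2, p3, p4⟩ := h.exists_phi hS hF
  obtain ⟨R, hR⟩ := h.exists_R hS hF
  have hNm : Monotone N := monotone_nat_of_le_succ fun n => (Nat.le_succ _).trans (h.lt n)
  have hNn : ∀ n, n ≤ N n := by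
    intro n
    induction n with
    | zero => exact Nat.zero_le _
    | succ n ih => exact (Nat.succ_le_succ ih).trans (h.lt n)
  have hone : ∀ n, (1 : A) ∈ S n := fun n => one_mem _
  have huniq : ∀ n, ∀ x ∈ S n, ∀ y ∈ S n, s n x = s n y → x = y := by
    intro n x hx y hy hxy
    rw [← sub_eq_zero, ← norm_eq_zero,
      ← h.norm n _ (sub_mem hx hy), map_sub, hxy, sub_self, norm_zero]
  obtain ⟨Φ, hΦ⟩ := glue (fun n => Subalgebra.toSubmodule (S n).toSubalgebra)
    (fun i j hij x hx => hS.mono hij hx) hS.dense φ p1 p2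
  obtain ⟨Ψ, hΨ⟩ := glue (fun n => Subalgebra.toSubmodule (F (N n)).toSubalgebra)
    (fun i j hij x hx => hF.mono (hNm hij) hx) (hF.dense.mono (by
      intro x hx
      obtain ⟨n, hn⟩ := Set.mem_iUnion.1 hx
      exact Set.mem_iUnion.2 ⟨n, hF.mono (hNn n) hn⟩)) R (by
      intro n b hb
      have hb' : b ∈ F (N (n + 1)) := hF.mono (hNm (Nat.le_succ n)) hb
      obtain ⟨r1, r2⟩ := hR n b hb
      obtain ⟨r3, r4⟩ := hR (n + 1) b hb'
      have r1' := hS.mono (Nat.le_succ n) r1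
      refine huniq (n + 2) _ (hS.mono (Nat.le_succ _) r3) _ (hS.mono (Nat.le_succ _) r1') ?_
      rw [← r4, ← h.ext (n + 1) _ r1', ← r2]
      have e1 := h.q_s hS.mono (n + 1) (hone _)
      have e2 := h.s_q hS.mono (n + 1) (hone _)
      generalize s (n + 1 + 1) 1 = Q at *
      generalize s (n + 1) 1 = q at *
      calc Q * b * Q = (Q * q) * b * (q * Q) := by rw [e1, e2]
        _ = _ := by simp only [mul_assoc]) (by
      intro n b hb
      obtain ⟨r1, r2⟩ := hR n b hb
      rw [← h.norm (n + 1) _ (hS.mono (Nat.le_succ n) r1), ← r2]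
      have hp : ‖s (n + 1) 1‖ ≤ 1 := proj_norm (h.q_sa _) (h.mul_q _ _)
      calc ‖s (n + 1) 1 * b * s (n + 1) 1‖ ≤ ‖s (n + 1) 1‖ * ‖b‖ * ‖s (n + 1) 1‖ :=
            norm_mul₃_le
        _ ≤ 1 * ‖b‖ * 1 := by gcongr
        _ = ‖b‖ := by ring)
  refine ⟨Φ, Ψ, fun a => ?_⟩
  have hcl : IsClosed {a : A | Ψ (Φ a) = a} := isClosed_eq (by fun_prop) (by fun_prop)
  have : a ∈ closure (⋃ n, (S n : Set A)) := hS.dense a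
  refine (hcl.closure_subset_iff.2 ?_) this
  intro x hx
  obtain ⟨n, hn⟩ := Set.mem_iUnion.1 hx
  change Ψ (Φ x) = x
  rw [hΦ n x hn, hΨ n _ (p3 n x)]
  obtain ⟨r1, r2⟩ := hR n _ (p3 n x)
  rw [p4 n x hn] at r2
  exact huniq (n + 1) _ (hS.mono (Nat.le_succ n) r1) _ (hS.mono (Nat.le_succ n) hn) r2.symm

end Key

section CzeroSec
variable {A : Type*} [CStarAlgebra A]

open OnePoint in
/-- finite stage algebras for functions on the one-point compactification of `ℕ` -/
def cStage (S : ℕ → StarSubalgebra ℂ A) (n : ℕ) : StarSubalgebra ℂ C(OnePoint ℕ, A) where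
  carrier := {f | (∀ i, f i ∈ S n) ∧ ∀ i : ℕ, n ≤ i → f (i : OnePoint ℕ) = f ∞}
  mul_mem' := fun {f g} hf hg => ⟨fun i => mul_mem (hf.1 i) (hg.1 i), fun i hi => by
    rw [ContinuousMap.mul_apply, ContinuousMap.mul_apply, hf.2 i hi, hg.2 i hi]⟩
  add_mem' := fun {f g} hf hg => ⟨fun i => add_mem (hf.1 i) (hg.1 i), fun i hi => by
    rw [ContinuousMap.add_apply, ContinuousMap.add_apply, hf.2 i hi, hg.2 i hi]⟩
  algebraMap_mem' := fun r => ⟨fun i => (S n).algebraMap_mem r, fun i hi => rfl⟩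
  star_mem' := fun {f} hf => ⟨fun i => star_mem (hf.1 i), fun i hi => by
    rw [ContinuousMap.star_apply, ContinuousMap.star_apply, hf.2 i hi]⟩

open OnePoint in
theorem mem_cStage {S : ℕ → StarSubalgebra ℂ A} {n : ℕ} {f : C(OnePoint ℕ, A)} :
    f ∈ cStage S n ↔ (∀ i, f i ∈ S n) ∧ ∀ i : ℕ, n ≤ i → f (i : OnePoint ℕ) = f ∞ := Iff.rfl

open OnePoint in
theorem cStage_uaf {S : ℕ → StarSubalgebra ℂ A} (hS : UAF A S) :
    UAF C(OnePoint ℕ, A) (cStage S) := by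
  refine ⟨?_, ?_, ?_⟩
  · intro i j hij f hf
    exact ⟨fun k => hS.mono hij (hf.1 k), fun k hk => hf.2 k (hij.trans hk)⟩
  · intro n
    have := hS.fd n
    let L : cStage S n →ₗ[ℂ] ((Fin n → S n) × S n) :=
      { toFun := fun f => (fun i => ⟨f.1 ((i : ℕ) : OnePoint ℕ), f.2.1 _⟩, ⟨f.1 ∞, f.2.1 _⟩)
        map_add' := fun f g => rfl
        map_smul' := fun r f => rfl }
    refine FiniteDimensional.of_injective L ?_
    intro f g hfg
    apply Subtype.ext
    have h1 : f.1 ∞ = g.1 ∞ := congrArg Subtype.val (congrArg Prod.snd hfg)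
    ext x
    induction x using OnePoint.rec with
    | infty => exact h1
    | coe i =>
      by_cases hi : i < n
      · exact congrArg Subtype.val (congrFun (congrArg Prod.fst hfg) ⟨i, hi⟩)
      · rw [f.2.2 i (not_lt.1 hi), g.2.2 i (not_lt.1 hi), h1]
  · intro g
    rw [Metric.mem_closure_iff]
    intro ε hε
    have happ : ∀ x : A, ∃ k, ∃ a ∈ S k, dist x a < ε / 2 := by
      intro x
      obtain ⟨a, ha, hd⟩ := Metric.mem_closure_iff.1 (hS.dense x) (ε / 2) (half_pos hε)
      obtain ⟨k, hk⟩ := Set.mem_iUnion.1 ha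
      exact ⟨k, a, hk, hd⟩
    choose k a ha hd using happ
    have hg : Tendsto (fun i : ℕ => g (i : OnePoint ℕ)) atTop (𝓝 (g ∞)) :=
      (OnePoint.continuous_iff_from_nat g).1 g.continuous
    obtain ⟨n0, hn0⟩ := Metric.tendsto_atTop.1 hg (ε / 2) (half_pos hε)
    let fn : ℕ → A := fun i => if i < n0 then a (g (i : OnePoint ℕ)) else a (g ∞)
    have hfn : Tendsto fn atTop (𝓝 (a (g ∞))) := by
      refine tendsto_const_nhds.congr' ?_
      filter_upwards [eventually_ge_atTop n0] with i hi
      simp [fn, not_lt.2 hi]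
    let f : C(OnePoint ℕ, A) := OnePoint.continuousMapMkNat fn (a (g ∞)) hfn
    have hf1 : f ∞ = a (g ∞) := rfl
    have hf2 : ∀ i : ℕ, f (i : OnePoint ℕ) = fn i := fun i => rfl
    let n := max n0 (max (k (g ∞)) ((Finset.range n0).sup fun i => k (g (i : OnePoint ℕ))))
    have hm0 : a (g ∞) ∈ S n := hS.mono ((le_max_left _ _).trans (le_max_right _ _)) (ha _)
    refine ⟨f, Set.mem_iUnion.2 ⟨n, ?_, ?_⟩, ?_⟩
    · intro x
      induction x using OnePoint.rec with
      | infty => exact hm0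
      | coe i =>
        rw [hf2]
        by_cases hi : i < n0
        · simp only [fn, if_pos hi]
          refine hS.mono ?_ (ha _)
          exact (Finset.le_sup (f := fun i : ℕ => k (g (i : OnePoint ℕ)))
            (Finset.mem_range.2 hi)).trans ((le_max_right _ _).trans (le_max_right _ _))
        · simp only [fn, if_neg hi]; exact hm0
    · intro i hi
      rw [hf2, hf1]
      simp only [fn, if_neg (not_lt.2 ((le_max_left _ _).trans hi))]
    · rw [ContinuousMap.dist_lt_iff hε]
      intro x
      induction x using OnePoint.rec with
      | infty => exact (hd _).trans (half_lt_self hε)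
      | coe i =>
        rw [hf2]
        by_cases hi : i < n0
        · simp only [fn, if_pos hi]; exact (hd _).trans (half_lt_self hε)
        · simp only [fn, if_neg hi]
          calc dist (g (i : OnePoint ℕ)) (a (g ∞)) ≤ dist (g (i : OnePoint ℕ)) (g ∞) +
                dist (g ∞) (a (g ∞)) := dist_triangle _ _ _
            _ < ε / 2 + ε / 2 := add_lt_add (hn0 i (not_lt.1 hi)) (hd _)
            _ = ε := add_halves ε
end CzeroSec

section Pel

open scoped ZeroAtInfty

/-- `V` is (isomorphic to) a complemented subspace of `W`. -/
def Cmp (V W : Type*) [NormedAddCommGroup V] [NormedSpace ℂ V] [NormedAddCommGroup W]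
    [NormedSpace ℂ W] : Prop :=
  ∃ (φ : V →L[ℂ] W) (ψ : W →L[ℂ] V), ∀ v, ψ (φ v) = v

variable {U V W : Type*} [NormedAddCommGroup V] [NormedSpace ℂ V] [NormedAddCommGroup W]
  [NormedSpace ℂ W] [NormedAddCommGroup U] [NormedSpace ℂ U]

theorem Cmp.trans (h1 : Cmp U V) (h2 : Cmp V W) : Cmp U W := by
  obtain ⟨a, b, hab⟩ := h1
  obtain ⟨c, d, hcd⟩ := h2
  exact ⟨c.comp a, b.comp d, fun v => by simp [hab, hcd]⟩

theorem Cmp.split (h : Cmp V W) : ∃ K : Submodule ℂ W, Nonempty (W ≃L[ℂ] V × K) := by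
  obtain ⟨a, b, hab⟩ := h
  exact ⟨_, ⟨ContinuousLinearEquiv.equivOfRightInverse b a hab⟩⟩

theorem Cmp.absorb (h : Cmp V W) (h2 : Nonempty (V ≃L[ℂ] V × V)) :
    Nonempty (W ≃L[ℂ] V × W) := by
  obtain ⟨K, ⟨e⟩⟩ := h.split
  obtain ⟨s⟩ := h2
  exact ⟨e.trans ((s.prodCongr (.refl ℂ K)).trans ((ContinuousLinearEquiv.prodAssoc ℂ V V K).trans
    ((ContinuousLinearEquiv.refl ℂ V).prodCongr e.symm)))⟩

theorem c0_tendsto (f : C₀(ℕ, V)) : Tendsto f atTop (𝓝 0) := by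
  have := f.zero_at_infty'
  rw [cocompact_eq_cofinite, Nat.cofinite_eq_atTop] at this
  exact this

theorem c0_norm_coe (f : C₀(ℕ, V)) (n : ℕ) : ‖f n‖ ≤ ‖f‖ := by
  rw [← ZeroAtInftyContinuousMap.norm_toBCF_eq_norm]
  exact f.toBCF.norm_coe_le_norm n

/-- construct elements of c₀ -/
def mkC0 (f : ℕ → V) (hf : Tendsto f atTop (𝓝 0)) : C₀(ℕ, V) where
  toFun := f
  continuous_toFun := continuous_of_discreteTopology
  zero_at_infty' := by rw [cocompact_eq_cofinite, Nat.cofinite_eq_atTop]; exact hf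

theorem exists_toC0 (L : U →ₗ[ℂ] (ℕ → V)) (h0 : ∀ v, Tendsto (L v) atTop (𝓝 0)) (C : ℝ)
    (hC0 : 0 ≤ C) (hC : ∀ v n, ‖L v n‖ ≤ C * ‖v‖) :
    ∃ G : U →L[ℂ] C₀(ℕ, V), ∀ v n, G v n = L v n := by
  let G0 : U →ₗ[ℂ] C₀(ℕ, V) :=
    { toFun := fun v => mkC0 (L v) (h0 v)
      map_add' := fun x y => by
        ext n
        change L (x + y) n = L x n + L y n
        rw [map_add]; rfl
      map_smul' := fun r x => by
        ext n
        change L (r • x) n = r • L x n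
        rw [map_smul]; rfl }
  refine ⟨G0.mkContinuous C fun v => ?_, fun v n => rfl⟩
  rw [← ZeroAtInftyContinuousMap.norm_toBCF_eq_norm, BoundedContinuousFunction.norm_le
    (mul_nonneg hC0 (norm_nonneg v))]
  exact hC v

theorem exists_evC0 (n : ℕ) : ∃ G : C₀(ℕ, V) →L[ℂ] V, ∀ f, G f = f n := by
  let G0 : C₀(ℕ, V) →ₗ[ℂ] V :=
    { toFun := fun f => f n
      map_add' := fun f g => rfl
      map_smul' := fun r f => rfl }
  exact ⟨G0.mkContinuous 1 fun f => by rw [one_mul]; exact c0_norm_coe f n, fun f => rfl⟩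

theorem exists_compC0 (σ : ℕ → ℕ) (hσ : Tendsto σ atTop atTop) :
    ∃ G : C₀(ℕ, V) →L[ℂ] C₀(ℕ, V), ∀ f n, G f n = f (σ n) := by
  let L : C₀(ℕ, V) →ₗ[ℂ] (ℕ → V) :=
    { toFun := fun f n => f (σ n)
      map_add' := fun f g => rfl
      map_smul' := fun r f => rfl }
  exact exists_toC0 L (fun f => (c0_tendsto f).comp hσ) 1 zero_le_one fun f n => by
    rw [one_mul]; exact c0_norm_coe f _

theorem c0_cons [CompleteSpace V] : Nonempty (C₀(ℕ, V) ≃L[ℂ] V × C₀(ℕ, V)) := by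
  obtain ⟨G, hG⟩ := exists_evC0 (V := V) 0
  obtain ⟨H, hH⟩ := exists_compC0 (V := V) Nat.succ (tendsto_add_atTop_nat 1)
  refine ⟨ContinuousLinearEquiv.ofBijective (G.prod H) ?_ ?_⟩
  · rw [LinearMap.ker_eq_bot']
    intro f hf
    have h1 : G f = 0 := congrArg Prod.fst hf
    have h2 : H f = 0 := congrArg Prod.snd hf
    ext n
    cases n with
    | zero => rw [← hG, h1]; rfl
    | succ n => rw [← hH, h2]; rfl
  · rw [LinearMap.range_eq_top]
    rintro ⟨v, f⟩
    have ht : Tendsto (fun n => Nat.casesOn n v (fun k => f k) : ℕ → V) atTop (𝓝 0) := by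
      rw [← tendsto_add_atTop_iff_nat 1]
      exact c0_tendsto f
    refine ⟨mkC0 _ ht, Prod.ext ?_ ?_⟩
    · exact hG _
    · ext n
      exact hH _ n

theorem c0_square [CompleteSpace V] : Nonempty (C₀(ℕ, V) ≃L[ℂ] C₀(ℕ, V) × C₀(ℕ, V)) := by
  have t1 : Tendsto (fun n : ℕ => 2 * n) atTop atTop :=
    tendsto_atTop_mono (fun n => by dsimp; omega) tendsto_id
  have t2 : Tendsto (fun n : ℕ => 2 * n + 1) atTop atTop :=
    tendsto_atTop_mono (fun n => by dsimp; omega) tendsto_id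
  obtain ⟨G, hG⟩ := exists_compC0 (V := V) (fun n => 2 * n) t1
  obtain ⟨H, hH⟩ := exists_compC0 (V := V) (fun n => 2 * n + 1) t2
  refine ⟨ContinuousLinearEquiv.ofBijective (G.prod H) ?_ ?_⟩
  · rw [LinearMap.ker_eq_bot']
    intro f hf
    have h1 : G f = 0 := congrArg Prod.fst hf
    have h2 : H f = 0 := congrArg Prod.snd hf
    ext n
    rcases Nat.even_or_odd' n with ⟨k, rfl | rfl⟩
    · have := hG f k
      rw [← this, h1]; rfl
    · have := hH f k
      rw [← this, h2]; rfl
  · rw [LinearMap.range_eq_top]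
    rintro ⟨f, g⟩
    have t3 : Tendsto (fun n : ℕ => n / 2) atTop atTop :=
      Nat.tendsto_div_const_atTop (by norm_num)
    have ht : Tendsto (fun n => if n % 2 = 0 then f (n / 2) else g (n / 2) : ℕ → V) atTop (𝓝 0) := by
      refine Tendsto.if' ?_ ?_
      · exact (c0_tendsto f).comp t3
      · exact (c0_tendsto g).comp t3
    refine ⟨mkC0 _ ht, Prod.ext ?_ ?_⟩
    · ext n
      refine (hG _ n).trans ?_
      change (if (2 * n) % 2 = 0 then f ((2 * n) / 2) else g ((2 * n) / 2)) = f n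
      rw [if_pos (by omega), show 2 * n / 2 = n by omega]
    · ext n
      refine (hH _ n).trans ?_
      change (if (2 * n + 1) % 2 = 0 then f ((2 * n + 1) / 2) else g ((2 * n + 1) / 2)) = g n
      rw [if_neg (by omega), show (2 * n + 1) / 2 = n by omega]

open OnePoint in
theorem c0_cmp : Cmp C₀(ℕ, V) C(OnePoint ℕ, V) := by
  let φ0 : C₀(ℕ, V) →ₗ[ℂ] C(OnePoint ℕ, V) :=
    { toFun := fun f => OnePoint.continuousMapMkNat f 0 (c0_tendsto f)
      map_add' := fun f g => by
        ext x
        induction x using OnePoint.rec with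
        | infty => exact (add_zero (0 : V)).symm
        | coe i => rfl
      map_smul' := fun r f => by
        ext x
        induction x using OnePoint.rec with
        | infty => exact (smul_zero r).symm
        | coe i => rfl }
  let L : C(OnePoint ℕ, V) →ₗ[ℂ] (ℕ → V) :=
    { toFun := fun g n => g (n : OnePoint ℕ) - g ∞
      map_add' := fun f g => by
        ext n
        exact add_sub_add_comm _ _ _ _
      map_smul' := fun r g => by
        ext n
        exact (smul_sub r _ _).symm }
  obtain ⟨ψ, hψ⟩ := exists_toC0 L (fun g => by
      have hg : Tendsto (fun i : ℕ => g (i : OnePoint ℕ)) atTop (𝓝 (g ∞)) :=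
        (OnePoint.continuous_iff_from_nat g).1 g.continuous
      have := hg.sub_const (g ∞)
      rw [sub_self] at this
      exact this) 2 zero_le_two (fun g n => by
      refine (norm_sub_le _ _).trans ?_
      have h1 := g.norm_coe_le_norm (n : OnePoint ℕ)
      have h2 := g.norm_coe_le_norm ∞
      linarith)
  refine ⟨φ0.mkContinuous 1 fun f => ?_, ψ, fun f => ?_⟩
  · rw [one_mul, ContinuousMap.norm_le _ (norm_nonneg f)]
    intro x
    induction x using OnePoint.rec with
    | infty =>
      have : φ0 f ∞ = 0 := rfl
      rw [this, norm_zero]; exact norm_nonneg f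
    | coe i => exact c0_norm_coe f i
  · ext n
    rw [hψ]
    exact sub_zero (f n)

end Pel

section Final
open scoped ZeroAtInfty

theorem self_square {A : Type*} [CStarAlgebra A]
    {S : ℕ → StarSubalgebra ℂ A} (hS : UAF A S) (hs : IsSimpleCStarAlgebra A)
    (hinf : ¬ FiniteDimensional ℂ A) : Nonempty (A ≃L[ℂ] A × A) := by
  have h1 : Cmp C₀(ℕ, A) A := c0_cmp.trans (key_embedding (cStage_uaf hS) hS hs hinf)
  obtain ⟨s⟩ := c0_square (V := A)
  obtain ⟨c⟩ := c0_cons (V := A)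
  obtain ⟨e⟩ := h1.absorb ⟨s⟩
  have f : A ≃L[ℂ] C₀(ℕ, A) := e.trans ((ContinuousLinearEquiv.prodComm ℂ _ _).trans c.symm)
  exact ⟨f.trans (s.trans (f.symm.prodCongr f.symm))⟩

theorem final {A B : Type*} [CStarAlgebra A] [CStarAlgebra B]
    {S : ℕ → StarSubalgebra ℂ A} {F : ℕ → StarSubalgebra ℂ B} (hS : UAF A S) (hF : UAF B F)
    (hA : IsSimpleCStarAlgebra A) (hB : IsSimpleCStarAlgebra B)
    (hAi : ¬ FiniteDimensional ℂ A) (hBi : ¬ FiniteDimensional ℂ B) : Nonempty (A ≃L[ℂ] B) := by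
  have h1 : Cmp A B := key_embedding hS hF hB hBi
  have h2 : Cmp B A := key_embedding hF hS hA hAi
  obtain ⟨e⟩ := h1.absorb (self_square hS hA hAi)
  obtain ⟨f⟩ := h2.absorb (self_square hF hB hBi)
  exact ⟨f.trans ((ContinuousLinearEquiv.prodComm ℂ _ _).trans e.symm)⟩
end Final

end AFIso

theorem simple_unital_af_linearly_homeomorphic
    (A B : Type*) [CStarAlgebra A] [CStarAlgebra B]
    (hA : ∃ SA : ℕ → NonUnitalStarSubalgebra ℂ A, IsAFPresentation A SA)
    (hB : ∃ SB : ℕ → NonUnitalStarSubalgebra ℂ B, IsAFPresentation B SB)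
    (hAsimple : IsSimpleCStarAlgebra A) (hBsimple : IsSimpleCStarAlgebra B)
    (hAinf : ¬ FiniteDimensional ℂ A) (hBinf : ¬ FiniteDimensional ℂ B) :
    Nonempty (A ≃L[ℂ] B) := by
  obtain ⟨S, hS⟩ := AFIso.exists_uaf hA
  obtain ⟨F, hF⟩ := AFIso.exists_uaf hB
  exact AFIso.final hS hF hAsimple hBsimple hAinf hBinf
end

section
/- Let A be an infinite-dimensional simple AF C*-algebra with AF presentation (A_k). If the presentation (A_k) does not have the Fermion property, then A is *-isomorphic to K, the C*-algebra of compact operators on ℓ²(ℕ, ℂ). -/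
/-!
Statement 7 (from the proof of Corollary 1.4/1.5).

An infinite-dimensional simple AF C*-algebra whose AF presentation fails the
Fermion property is *-isomorphic to the compact operators on `ℓ²(ℕ, ℂ)`.
-/

noncomputable section

local notation "H" => lp (fun _ : ℕ => ℂ) 2

/-- The compact operators on `ℓ²(ℕ, ℂ)`, as a subspace of the bounded
operators with the operator norm. -/
def CompactOperators : Submodule ℂ (H →L[ℂ] H) where
  carrier := {T | IsCompactOperator T}
  add_mem' := fun hS hT => hS.add hT
  zero_mem' := isCompactOperator_zero
  smul_mem' := fun c _T hT => hT.smul c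

/-- The presentation `S` has the Fermion property: there are indices
`n 0 < n 1 < ⋯` and nonzero minimal central projections `p k` of `S (n k)` such
that for every minimal projection `e` of the corner `p k • S (n k) • p k`,
the projection `p (k+1) * e` is nonzero and is not a minimal projection of
`S (n (k+1))`. -/
def HasFermionProperty (A : Type*) [NonUnitalCStarAlgebra A]
    (S : ℕ → NonUnitalStarSubalgebra ℂ A) : Prop :=
  ∃ (n : ℕ → ℕ) (p : ℕ → A),
    StrictMono n ∧
    (∀ k, p k ∈ S (n k)) ∧
    (∀ k, p k * p k = p k ∧ star (p k) = p k) ∧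
    (∀ k, p k ≠ 0) ∧
    -- `p k` is central in `S (n k)`
    (∀ k, ∀ a ∈ S (n k), p k * a = a * p k) ∧
    -- `p k` is minimal among the central projections of `S (n k)`
    (∀ k, ∀ q ∈ S (n k), (q * q = q ∧ star q = q) → (∀ a ∈ S (n k), q * a = a * q) →
      q * p k = q → q ≠ 0 → q = p k) ∧
    -- every minimal projection `e` of the corner `p k * S (n k) * p k` meets the
    -- next summand with multiplicity at least two
    (∀ k, ∀ e ∈ S (n k), (e * e = e ∧ star e = e) → e ≠ 0 → e * p k = e →
      (∀ a ∈ S (n k), ∃ c : ℂ, e * a * e = c • e) →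
      (p (k + 1) * e ≠ 0 ∧
        ∃ q ∈ S (n (k + 1)), (q * q = q ∧ star q = q) ∧ q ≠ 0 ∧
          q * (p (k + 1) * e) = q ∧ (p (k + 1) * e) * q = q ∧ q ≠ p (k + 1) * e))

/-- projection -/
def IsPr {A : Type*} [Mul A] [Star A] (p : A) : Prop := p * p = p ∧ star p = p

section fd
variable {A : Type*} [NonUnitalCStarAlgebra A]

lemma fd_quasispectrum_finite (B : NonUnitalStarSubalgebra ℂ A) [FiniteDimensional ℂ B]
    {x : A} (hx : x ∈ B) : (quasispectrum ℂ x).Finite := by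
  rw [Unitization.quasispectrum_eq_spectrum_inr' ℂ ℂ x]
  set X : Unitization ℂ A := (x : Unitization ℂ A) with hX
  let B' : Submodule ℂ (Unitization ℂ A) :=
    (B.toNonUnitalSubalgebra.toSubmodule).map (Unitization.inrHom ℂ ℂ A : A →ₗ[ℂ] Unitization ℂ A)
  have : FiniteDimensional ℂ B.toNonUnitalSubalgebra.toSubmodule := ‹FiniteDimensional ℂ B›
  have : FiniteDimensional ℂ B' := inferInstance
  have key : ∀ p : Polynomial ℂ, Polynomial.aeval X (Polynomial.X * p) ∈ B' := by
    have hXB : X ∈ B' := ⟨x, hx, rfl⟩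
    have hmul : ∀ y ∈ B', y * X ∈ B' := by
      rintro _ ⟨y, hy, rfl⟩
      exact ⟨y * x, B.mul_mem hy hx, by simp [hX]⟩
    intro p
    induction p using Polynomial.induction_on' with
    | add p q hp hq => rw [mul_add, map_add]; exact add_mem hp hq
    | monomial n a =>
      have : Polynomial.aeval X (Polynomial.X * Polynomial.monomial n a) = a • X ^ (n+1) := by
        rw [Polynomial.X_mul_monomial, Polynomial.aeval_monomial, Algebra.smul_def]
      rw [this]
      refine B'.smul_mem a ?_
      clear this
      induction n with
      | zero => simpa using hXB
      | succ n ih => rw [pow_succ]; exact hmul _ ih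
  let f : Polynomial ℂ →ₗ[ℂ] B' :=
    ((Polynomial.aeval X).toLinearMap.comp (LinearMap.mulLeft ℂ Polynomial.X)).codRestrict B'
      (fun p => key p)
  have hf : ¬ Function.Injective f := by
    intro hinj
    have := FiniteDimensional.of_injective f hinj
    exact Polynomial.not_finite this
  obtain ⟨p, hp, hp0⟩ : ∃ p, f p = 0 ∧ p ≠ 0 := by
    by_contra! h
    exact hf ((injective_iff_map_eq_zero f).2 h)
  have hp' : Polynomial.aeval X (Polynomial.X * p) = 0 := congrArg Subtype.val hp
  have hne : Polynomial.X * p ≠ 0 := mul_ne_zero Polynomial.X_ne_zero hp0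
  refine ((Polynomial.X * p).roots.toFinset.finite_toSet).subset ?_
  intro z hz
  have := spectrum.subset_polynomial_aeval X (Polynomial.X * p) ⟨z, hz, rfl⟩
  rw [hp', spectrum.zero_eq] at this
  simpa [hne, hp0] using this

lemma fd_spectral (B : NonUnitalStarSubalgebra ℂ A) [FiniteDimensional ℂ B]
    {x : A} (hx : x ∈ B) (hs : star x = x) (h0 : x ≠ 0) :
    ∃ r ∈ B, IsPr r ∧ r ≠ 0 ∧ ∃ c : ℂ, c ≠ 0 ∧ x * r = c • r ∧ r * x = c • r := by
  have hfin := fd_quasispectrum_finite B hx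
  have hsa : IsSelfAdjoint x := hs
  have hn : IsStarNormal x := hsa.isStarNormal
  have hcont : ∀ f : ℂ → ℂ, ContinuousOn f (quasispectrum ℂ x) := fun f => hfin.continuousOn f
  obtain ⟨c, hc, hc0⟩ : ∃ c ∈ quasispectrum ℂ x, c ≠ 0 := by
    by_contra! h
    apply h0
    rw [← cfcₙ_id ℂ x hn, ← cfcₙ_zero ℂ x]
    exact cfcₙ_congr fun z hz => h z hz
  let f : ℂ → ℂ := fun z => if z = c then 1 else 0
  have f0 : f 0 = 0 := by simp [f, hc0.symm]
  have hBcl : IsClosed (B : Set A) := by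
    have : FiniteDimensional ℂ B.toNonUnitalSubalgebra.toSubmodule := ‹FiniteDimensional ℂ B›
    exact B.toNonUnitalSubalgebra.toSubmodule.closed_of_finiteDimensional
  have hff : (fun z => f z * f z) = f := by ext z; simp [f]
  have hmul : x * cfcₙ f x = c • cfcₙ f x := by
    conv_lhs => rw [← cfcₙ_id' ℂ x hn]
    rw [cfcₙ_id' ℂ x hn]
    rw [← cfcₙ_smul c f x (hcont _) f0]
    conv_lhs => rw [show x * cfcₙ f x = cfcₙ (fun z => z) x * cfcₙ f x by rw [cfcₙ_id' ℂ x hn]]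
    rw [← cfcₙ_mul (fun z => z) f x (hcont _) rfl (hcont _) f0]
    apply cfcₙ_congr
    intro z hz
    by_cases h : z = c <;> simp [f, h]
  have hst : star (cfcₙ f x) = cfcₙ f x := by
    rw [← cfcₙ_star]
    apply cfcₙ_congr
    intro z hz
    by_cases h : z = c <;> simp [f, h]
  refine ⟨cfcₙ f x, ?_, ⟨?_, hst⟩, ?_, c, hc0, hmul, ?_⟩
  · have := cfcₙ_mem_elemental (p := IsStarNormal) f x
    exact (NonUnitalStarAlgebra.elemental.le_of_mem hBcl hx) this
  · rw [← cfcₙ_mul f f x (hcont _) f0 (hcont _) f0, hff]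
  · intro h
    rw [← cfcₙ_zero ℂ x] at h
    have := (cfcₙ_eq_cfcₙ_iff_eqOn hn (hcont _) f0 (hcont _) rfl).1 h hc
    simp [f] at this
  · rw [← hmul]
    have := cfcₙ_commute_cfcₙ (fun z : ℂ => z) f x
    rw [cfcₙ_id' ℂ x hn] at this
    exact this.symm.eq
end fd

section fd2
variable {A : Type*} [NonUnitalCStarAlgebra A]

/-- elements of `B` fixed by right multiplication with `u` -/
def fixR (B : NonUnitalStarSubalgebra ℂ A) (u : A) : Submodule ℂ B where
  carrier := {b | (b : A) * u = b}
  add_mem' := by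
    intro a b ha hb
    simp only [Set.mem_ofPred_eq] at *
    simp [add_mul, ha, hb]
  zero_mem' := by simp
  smul_mem' := by
    intro c a ha
    simp only [Set.mem_ofPred_eq] at *
    simp [smul_mul_assoc, ha]

lemma mem_fixR {B : NonUnitalStarSubalgebra ℂ A} {u : A} {b : B} :
    b ∈ fixR B u ↔ (b : A) * u = b := Iff.rfl

lemma IsPr.comm_of_le {p q : A} (hp : IsPr p) (hq : IsPr q) (h : q * p = q) : p * q = q := by
  have := congrArg star h
  rwa [star_mul, hp.2, hq.2] at this

lemma IsPr.sub {p q : A} (hp : IsPr p) (hq : IsPr q) (h : q * p = q) : IsPr (p - q) := by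
  have h' := hp.comm_of_le hq h
  refine ⟨?_, by rw [star_sub, hp.2, hq.2]⟩
  rw [sub_mul, mul_sub, mul_sub, hp.1, hq.1, h, h']
  abel

lemma fd_unit (B : NonUnitalStarSubalgebra ℂ A) [FiniteDimensional ℂ B] :
    ∃ u ∈ B, IsPr u ∧ ∀ b ∈ B, b * u = b ∧ u * b = b := by
  have wf : WellFounded ((· > ·) : Submodule ℂ B → Submodule ℂ B → Prop) := wellFounded_gt
  obtain ⟨_, ⟨u, ⟨huB, hu⟩, rfl⟩, hmax⟩ := wf.has_min
    ((fixR B) '' {u | u ∈ B ∧ IsPr u}) ⟨_, 0, ⟨zero_mem _, by simp [IsPr]⟩, rfl⟩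
  have key : ∀ b ∈ B, b * u = b := by
    intro b hb
    by_contra hne
    set y := b - b * u with hy
    have hy0 : y ≠ 0 := fun h => hne (sub_eq_zero.1 h).symm
    have hyB : y ∈ B := sub_mem hb (mul_mem hb huB)
    have hyu : y * u = 0 := by rw [hy, sub_mul, mul_assoc, hu.1, sub_self]
    have hxx : star y * y ≠ 0 := by
      rw [Ne, CStarRing.star_mul_self_eq_zero_iff]; exact hy0
    obtain ⟨r, hrB, hr, hr0, c, hc, h1, h2⟩ := fd_spectral B (mul_mem (star_mem hyB) hyB)
      (by simp) hxx
    have hru : r * u = 0 := by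
      have : c • (r * u) = 0 := by
        rw [← smul_mul_assoc, ← h2, mul_assoc, mul_assoc, hyu, mul_zero, mul_zero]
      exact (smul_eq_zero.1 this).resolve_left hc
    have hur : u * r = 0 := by
      have := congrArg star hru
      simpa [hr.2, hu.2] using this
    refine hmax (fixR B (u + r)) ⟨u + r, ⟨add_mem huB hrB, ?_, ?_⟩, rfl⟩ ?_
    · rw [add_mul, mul_add, mul_add, hu.1, hr.1, hru, hur]; abel
    · rw [star_add, hu.2, hr.2]
    · refine lt_of_le_of_ne ?_ ?_
      · intro b hb
        rw [mem_fixR] at hb ⊢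
        rw [mul_add, hb]
        conv_lhs => rw [← hb, mul_assoc _ u r, hur, hb]
        simp
      · intro h
        have : (⟨r, hrB⟩ : B) ∈ fixR B u := by
          rw [h, mem_fixR]; simp [mul_add, hru, hr.1]
        rw [mem_fixR] at this
        exact hr0 (this.symm.trans hru)
  refine ⟨u, huB, hu, fun b hb => ⟨key b hb, ?_⟩⟩
  have := congrArg star (key (star b) (star_mem hb))
  simpa [hu.2] using this

/-- `e` is a scalar corner in `B` -/
def ScalarCorner (B : NonUnitalStarSubalgebra ℂ A) (e : A) : Prop :=
  ∀ a ∈ B, ∃ c : ℂ, e * a * e = c • e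

lemma scalarCorner_of_min (B : NonUnitalStarSubalgebra ℂ A) [FiniteDimensional ℂ B]
    {e : A} (heB : e ∈ B) (he : IsPr e)
    (hmin : ∀ q ∈ B, IsPr q → q ≠ 0 → q * e = q → e * q = q → q = e) : ScalarCorner B e := by
  have hsa : ∀ x ∈ B, star x = x → e * x = x → ∃ c : ℂ, x = c • e := by
    intro x hx hs hex
    by_cases h0 : x = 0
    · exact ⟨0, by simp [h0]⟩
    obtain ⟨r, hrB, hr, hr0, c, hc, h1, h2⟩ := fd_spectral B hx hs h0
    have her : e * r = r := by
      have : c • (e * r) = c • r := by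
        rw [← mul_smul_comm, ← h1, ← mul_assoc, hex]
      exact smul_right_injective A hc this
    have hre : r * e = r := by
      have := congrArg star her
      simpa [hr.2, he.2] using this
    have := hmin r hrB hr hr0 hre her
    subst this
    refine ⟨c, ?_⟩
    rw [← h2, hex]
  intro a ha
  have m1 : e * a * e ∈ B := mul_mem (mul_mem heB ha) heB
  have m2 : e * star a * e ∈ B := mul_mem (mul_mem heB (star_mem ha)) heB
  have s1 : star (e * a * e) = e * star a * e := by simp [he.2, mul_assoc]
  have s2 : star (e * star a * e) = e * a * e := by simp [he.2, mul_assoc]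
  have i1 : ∀ b, e * (e * b * e) = e * b * e := by intro b; simp only [← mul_assoc, he.1]
  obtain ⟨c, hc⟩ := hsa (e * a * e + e * star a * e) (add_mem m1 m2)
    (by rw [star_add, s1, s2, add_comm]) (by rw [mul_add, i1, i1])
  obtain ⟨d, hd⟩ := hsa (Complex.I • (e * a * e - e * star a * e))
    (B.smul_mem _ (sub_mem m1 m2))
    (by rw [star_smul, star_sub, s1, s2]; simp [smul_sub, neg_add_eq_sub])
    (by rw [mul_smul_comm, mul_sub, i1, i1])
  refine ⟨(1/2 : ℂ) * c - (Complex.I / 2) * d, ?_⟩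
  rw [sub_smul, mul_smul, mul_smul, ← hc, ← hd, smul_smul]
  have : Complex.I / 2 * Complex.I = -(1/2) := by
    have := Complex.I_mul_I
    linear_combination this / 2
  rw [this]
  module

lemma exists_min_le (B : NonUnitalStarSubalgebra ℂ A) [FiniteDimensional ℂ B]
    {e : A} (heB : e ∈ B) (he : IsPr e) (he0 : e ≠ 0) :
    ∃ f ∈ B, IsPr f ∧ f ≠ 0 ∧ f * e = f ∧ ScalarCorner B f := by
  have wf : WellFounded ((· < ·) : Submodule ℂ B → Submodule ℂ B → Prop) := wellFounded_lt
  obtain ⟨_, ⟨f, ⟨hfB, hf, hf0, hfe⟩, rfl⟩, hmin⟩ := wf.has_min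
    ((fixR B) '' {u | u ∈ B ∧ IsPr u ∧ u ≠ 0 ∧ u * e = u}) ⟨_, e, ⟨heB, he, he0, he.1⟩, rfl⟩
  refine ⟨f, hfB, hf, hf0, hfe, scalarCorner_of_min B hfB hf ?_⟩
  intro q hqB hq hq0 hqf hfq
  by_contra hne
  refine hmin (fixR B q) ⟨q, ⟨hqB, hq, hq0, ?_⟩, rfl⟩ (lt_of_le_of_ne ?_ ?_)
  · rw [← hqf, mul_assoc, hfe]
  · intro b hb
    rw [mem_fixR] at hb ⊢
    rw [← hb, mul_assoc, hqf]
  · intro h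
    have : (⟨f, hfB⟩ : B) ∈ fixR B q := by rw [h, mem_fixR]; exact hf.1
    rw [mem_fixR] at this
    exact hne (by rw [← hfq]; exact this)

/-- minimal central projections of `B` -/
structure MinCentral (B : NonUnitalStarSubalgebra ℂ A) (p : A) : Prop where
  mem : p ∈ B
  pr : IsPr p
  ne : p ≠ 0
  central : ∀ a ∈ B, p * a = a * p
  min : ∀ q ∈ B, (q * q = q ∧ star q = q) → (∀ a ∈ B, q * a = a * q) →
      q * p = q → q ≠ 0 → q = p

lemma exists_minCentral (B : NonUnitalStarSubalgebra ℂ A) [FiniteDimensional ℂ B]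
    {w : A} (hw : w ∈ B) (hw0 : w ≠ 0) : ∃ q, MinCentral B q ∧ q * w ≠ 0 := by
  have wf : WellFounded ((· < ·) : Submodule ℂ B → Submodule ℂ B → Prop) := wellFounded_lt
  obtain ⟨u, huB, hu, hun⟩ := fd_unit B
  obtain ⟨_, ⟨z, ⟨hzB, hz, hzc, hzw⟩, rfl⟩, hmin⟩ := wf.has_min
    ((fixR B) '' {z | z ∈ B ∧ IsPr z ∧ (∀ a ∈ B, z * a = a * z) ∧ z * w ≠ 0})
    ⟨_, u, ⟨huB, hu, fun a ha => by rw [(hun a ha).1, (hun a ha).2],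
      by rw [(hun w hw).2]; exact hw0⟩, rfl⟩
  have hle : ∀ q : A, q * z = q → fixR B q ≤ fixR B z := by
    intro q hq b hb
    rw [mem_fixR] at hb ⊢
    rw [← hb, mul_assoc, hq]
  have key : ∀ q, q ∈ B → IsPr q → (∀ a ∈ B, q * a = a * q) → q * w ≠ 0 → q * z = q →
      z * q = z := by
    intro q hqB hq hqc hqw hqz
    have h : fixR B q = fixR B z := by
      by_contra hne
      exact hmin _ ⟨q, ⟨hqB, hq, hqc, hqw⟩, rfl⟩ (lt_of_le_of_ne (hle q hqz) hne)
    have : (⟨z, hzB⟩ : B) ∈ fixR B q := by rw [h, mem_fixR]; exact hz.1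
    exact this
  refine ⟨z, ⟨hzB, hz, fun h => hzw (by rw [h, zero_mul]), hzc, ?_⟩, hzw⟩
  intro q hqB hq hqc hqz hq0
  have hzq := hz.comm_of_le hq hqz
  by_cases hqw : q * w = 0
  · exfalso
    have := key (z - q) (sub_mem hzB hqB) (hz.sub hq hqz)
      (fun a ha => by rw [sub_mul, mul_sub, hzc a ha, hqc a ha])
      (by rw [sub_mul, hqw, sub_zero]; exact hzw)
      (by rw [sub_mul, hz.1, hqz])
    rw [mul_sub, hz.1, hzq] at this
    exact hq0 (by simpa using this)
  · have := key q hqB hq hqc hqw hqz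
    rw [← this, hzq]

lemma exists_transfer (B : NonUnitalStarSubalgebra ℂ A) [FiniteDimensional ℂ B]
    {p e e' : A} (hp : MinCentral B p) (heB : e ∈ B) (he : IsPr e) (he0 : e ≠ 0) (hep : e * p = e)
    (hes : ScalarCorner B e)
    (heB' : e' ∈ B) (he' : IsPr e') (he0' : e' ≠ 0) (hep' : e' * p = e') :
    ∃ v ∈ B, ∃ w ∈ B, v * e' * w = e := by
  obtain ⟨a, ha, hne⟩ : ∃ a ∈ B, e * a * e' ≠ 0 := by
    by_contra! hall
    let J : NonUnitalStarSubalgebra ℂ A :=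
      { carrier := {x | x ∈ B ∧ ∀ a ∈ B, x * a * e' = 0 ∧ e' * a * x = 0}
        add_mem' := by
          rintro x y ⟨hx, hx'⟩ ⟨hy, hy'⟩
          refine ⟨add_mem hx hy, fun a ha => ?_⟩
          simp [add_mul, mul_add, hx' a ha, hy' a ha]
        zero_mem' := ⟨zero_mem _, by simp⟩
        mul_mem' := by
          rintro x y ⟨hx, hx'⟩ ⟨hy, hy'⟩
          refine ⟨mul_mem hx hy, fun a ha => ⟨?_, ?_⟩⟩
          · rw [mul_assoc x y a]; exact (hx' _ (mul_mem hy ha)).1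
          · rw [← mul_assoc, mul_assoc e' a x]; exact (hy' _ (mul_mem ha hx)).2
        smul_mem' := by
          rintro c x ⟨hx, hx'⟩
          refine ⟨B.smul_mem c hx, fun a ha => ?_⟩
          rw [smul_mul_assoc, smul_mul_assoc, mul_smul_comm, (hx' a ha).1, (hx' a ha).2]
          simp
        star_mem' := by
          rintro x ⟨hx, hx'⟩
          refine ⟨star_mem hx, fun a ha => ⟨?_, ?_⟩⟩
          · have := congrArg star (hx' _ (star_mem ha)).2
            simpa [he'.2, mul_assoc] using this
          · have := congrArg star (hx' _ (star_mem ha)).1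
            simpa [he'.2, mul_assoc] using this }
    have hJB : J ≤ B := fun x hx => hx.1
    have : FiniteDimensional ℂ B.toNonUnitalSubalgebra.toSubmodule := ‹FiniteDimensional ℂ B›
    have : FiniteDimensional ℂ J :=
      Submodule.finiteDimensional_of_le (S₁ := J.toNonUnitalSubalgebra.toSubmodule)
        (S₂ := B.toNonUnitalSubalgebra.toSubmodule) hJB
    obtain ⟨z, hzJ, hz, hzu⟩ := fd_unit J
    have heJ : e ∈ J := by
      refine ⟨heB, fun a ha => ⟨hall a ha, ?_⟩⟩
      have := congrArg star (hall _ (star_mem ha))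
      simpa [he.2, he'.2, mul_assoc] using this
    have hl : ∀ b ∈ B, b * z ∈ J := by
      intro b hb
      refine ⟨mul_mem hb hzJ.1, fun a ha => ⟨?_, ?_⟩⟩
      · rw [mul_assoc b, mul_assoc b, (hzJ.2 a ha).1, mul_zero]
      · rw [← mul_assoc, mul_assoc e' a b]; exact (hzJ.2 _ (mul_mem ha hb)).2
    have hr : ∀ b ∈ B, z * b ∈ J := by
      intro b hb
      have := star_mem (hl _ (star_mem hb))
      simpa [hz.2] using this
    have hzc : ∀ b ∈ B, z * b = b * z := by
      intro b hb
      rw [← (hzu _ (hr b hb)).1, ← (hzu _ (hl b hb)).2, mul_assoc]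
    have hzp : z * p = p := by
      refine hp.min (z * p) (mul_mem hzJ.1 hp.mem) ⟨?_, ?_⟩ ?_ ?_ ?_
      · rw [mul_assoc, ← mul_assoc p z p, ← hzc p hp.mem, mul_assoc z p p, hp.pr.1, ← mul_assoc,
          hz.1]
      · rw [star_mul, hz.2, hp.pr.2, hzc p hp.mem]
      · intro a ha
        rw [mul_assoc, hp.central a ha, ← mul_assoc, hzc a ha, mul_assoc]
      · rw [mul_assoc, hp.pr.1]
      · intro h
        apply he0
        have hpe := hp.pr.comm_of_le he hep
        rw [← (hzu e heJ).2, ← hpe, ← mul_assoc, h, zero_mul]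
    apply he0'
    rw [← hep', ← hzp, ← mul_assoc, ← he'.1, (hzJ.2 e' heB').2, zero_mul]
  obtain ⟨c, hc⟩ := hes (a * e' * star a) (mul_mem (mul_mem ha heB') (star_mem ha))
  have hx : (e * a * e') * star (e * a * e') = c • e := by
    rw [← hc]
    simp only [star_mul, he.2, he'.2, mul_assoc]
    rw [← mul_assoc e' e', he'.1]
  have hc0 : c ≠ 0 := by
    rintro rfl
    rw [zero_smul, CStarRing.mul_star_self_eq_zero_iff] at hx
    exact hne hx
  have hmB : star (e * a * e') ∈ B := star_mem (mul_mem (mul_mem heB ha) heB')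
  refine ⟨e * a * e', mul_mem (mul_mem heB ha) heB', c⁻¹ • star (e * a * e'),
    B.smul_mem _ hmB, ?_⟩
  rw [mul_smul_comm, mul_assoc _ e' e', he'.1, hx, smul_smul, inv_mul_cancel₀ hc0, one_smul]

lemma transfer_scalar {B : NonUnitalStarSubalgebra ℂ A} {q e e' v w : A}
    (hq : ∀ a ∈ B, q * a = a * q) (hv : v ∈ B) (hw : w ∈ B) (he : v * e' * w = e)
    (hs : ScalarCorner B (q * e')) : ScalarCorner B (q * e) := by
  intro a ha
  obtain ⟨c, hc⟩ := hs (w * a * v) (mul_mem (mul_mem hw ha) hv)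
  refine ⟨c, ?_⟩
  have h1 : q * e = v * (q * e') * w := by
    rw [← he, ← mul_assoc, ← mul_assoc, hq v hv]; simp only [mul_assoc]
  rw [h1, ← smul_mul_assoc, ← mul_smul_comm, ← hc]
  simp only [mul_assoc]

lemma corner_comm (B : NonUnitalStarSubalgebra ℂ A) [FiniteDimensional ℂ B] {e : A}
    (heB : e ∈ B) (he : IsPr e) (h : ∀ q, MinCentral B q → ScalarCorner B (q * e))
    {x y : A} (hx : x ∈ B) (hy : y ∈ B) :
    (e * x * e) * (e * y * e) = (e * y * e) * (e * x * e) := by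
  by_contra hne
  have hX : e * x * e ∈ B := mul_mem (mul_mem heB hx) heB
  have hY : e * y * e ∈ B := mul_mem (mul_mem heB hy) heB
  obtain ⟨q, hq, hqw⟩ := exists_minCentral B (sub_mem (mul_mem hX hY) (mul_mem hY hX))
    (sub_ne_zero.2 hne)
  apply hqw
  have red : ∀ x ∈ B, ∃ c : ℂ, q * (e * x * e) = c • (q * e) := by
    intro x hx
    obtain ⟨c, hc⟩ := h q hq x hx
    refine ⟨c, ?_⟩
    rw [← hc]
    have : q * e * x * (q * e) = q * (e * x * q) * e := by simp only [mul_assoc]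
    rw [this, ← hq.central _ (mul_mem heB hx)]
    simp only [← mul_assoc, hq.pr.1]
  obtain ⟨c, hc⟩ := red x hx
  obtain ⟨d, hd⟩ := red y hy
  have i1 : ∀ b, e * (e * b * e) = e * b * e := by intro b; simp only [← mul_assoc, he.1]
  rw [mul_sub, ← mul_assoc q (e * x * e), ← mul_assoc q (e * y * e), hc, hd, smul_mul_assoc, smul_mul_assoc, mul_assoc q e,
    mul_assoc q e, i1, i1, hc, hd, smul_smul, smul_smul, mul_comm, sub_self]
end fd2

section p3
variable {A : Type*} [NonUnitalCStarAlgebra A]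

lemma exists_good_e (S : ℕ → NonUnitalStarSubalgebra ℂ A) (hS : IsAFPresentation A S)
    (hne : ∃ a : A, a ≠ 0) (hnotF : ¬ HasFermionProperty A S) :
    ∃ n, ∃ e ∈ S n, IsPr e ∧ e ≠ 0 ∧ ∀ m, n < m → ∀ q, MinCentral (S m) q →
      ScalarCorner (S m) (q * e) := by
  obtain ⟨hmono, hfd, hdense⟩ := hS
  let X := {x : ℕ × A // MinCentral (S x.1) x.2}
  let R : X → X → Prop := fun x y => x.1.1 < y.1.1 ∧
    ∀ e ∈ S x.1.1, (e * e = e ∧ star e = e) → e ≠ 0 → e * x.1.2 = e →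
      (∀ a ∈ S x.1.1, ∃ c : ℂ, e * a * e = c • e) →
      (y.1.2 * e ≠ 0 ∧
        ∃ q ∈ S y.1.1, (q * q = q ∧ star q = q) ∧ q ≠ 0 ∧
          q * (y.1.2 * e) = q ∧ (y.1.2 * e) * q = q ∧ q ≠ y.1.2 * e)
  obtain ⟨x0⟩ : Nonempty X := by
    obtain ⟨n, b, hb, hb0⟩ : ∃ n, ∃ b ∈ S n, b ≠ 0 := by
      by_contra! h
      obtain ⟨a, ha⟩ := hne
      have hsub : (⋃ k, (S k : Set A)) ⊆ {0} := by
        intro x hx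
        obtain ⟨k, hk⟩ := Set.mem_iUnion.1 hx
        exact h k x hk
      have : a ∈ closure ({0} : Set A) := closure_mono hsub (hdense a)
      rw [closure_singleton] at this
      exact ha this
    obtain ⟨q, hq, -⟩ := exists_minCentral (S n) hb hb0
    exact ⟨⟨(n, q), hq⟩⟩
  obtain ⟨x, hx⟩ : ∃ x : X, ∀ y : X, ¬ R x y := by
    by_contra! h
    choose f hf using h
    apply hnotF
    let s : ℕ → X := fun k => f^[k] x0
    have hs : ∀ k, R (s k) (s (k+1)) := by
      intro k
      simp only [s, Function.iterate_succ_apply']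
      exact hf _
    exact ⟨fun k => (s k).1.1, fun k => (s k).1.2, strictMono_nat_of_lt_succ fun k => (hs k).1,
      fun k => (s k).2.mem, fun k => (s k).2.pr, fun k => (s k).2.ne, fun k => (s k).2.central,
      fun k => (s k).2.min, fun k => (hs k).2⟩
  obtain ⟨⟨n, p⟩, hp⟩ := x
  dsimp only at hp
  have := hfd n
  obtain ⟨e, heB, he, he0, hep, hes⟩ := exists_min_le (S n) hp.mem hp.pr hp.ne
  refine ⟨n, e, heB, he, he0, ?_⟩
  intro m hm q hq
  have hnm : S n ≤ S m := hmono hm.le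
  have := hfd m
  have h := hx ⟨(m, q), hq⟩
  simp only [R, not_and, not_forall] at h
  obtain ⟨e', heB', he', he0', hep', hes', h⟩ := h hm
  obtain ⟨v, hv, w, hw, hvw⟩ := exists_transfer (S n) hp heB he he0 hep hes heB' he' he0' hep'
  refine transfer_scalar hq.central (hnm hv) (hnm hw) hvw ?_
  by_cases h0 : q * e' = 0
  · intro a _
    exact ⟨0, by simp [h0]⟩
  · refine scalarCorner_of_min (S m) (mul_mem hq.mem (hnm heB')) ⟨?_, ?_⟩ ?_
    · rw [mul_assoc, ← mul_assoc e' q, ← hq.central _ (hnm heB'), mul_assoc q e', he'.1,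
        ← mul_assoc, hq.pr.1]
    · rw [star_mul, he'.2, hq.pr.2, hq.central _ (hnm heB')]
    · intro r hr hrp hr0 h1 h2
      by_contra hne
      exact h h0 ⟨r, hr, hrp, hr0, h1, h2, hne⟩

/-- the ideal of elements annihilating `A g` from the left -/
def annIdeal (g : A) : TwoSidedIdeal A :=
  TwoSidedIdeal.mk' {x | ∀ a, x * a * g = 0} (by simp)
    (by intro x y hx hy a; simp [add_mul, hx a, hy a])
    (by intro x hx a; simp [hx a])
    (by intro x y hy a; rw [mul_assoc, mul_assoc, ← mul_assoc y, hy a, mul_zero])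
    (by intro x y hx a; rw [mul_assoc x y a]; exact hx _)

lemma mem_annIdeal {g x : A} : x ∈ annIdeal g ↔ ∀ a, x * a * g = 0 := by
  unfold annIdeal
  rw [TwoSidedIdeal.mem_mk']
  rfl

lemma isClosed_annIdeal (g : A) : IsClosed (annIdeal g : Set A) := by
  have : (annIdeal g : Set A) = ⋂ a, {x | x * a * g = 0} := by
    ext x
    simp [mem_annIdeal]
  rw [this]
  exact isClosed_iInter fun a => isClosed_eq (by fun_prop) continuous_const

lemma exists_minimal_e (S : ℕ → NonUnitalStarSubalgebra ℂ A) (hS : IsAFPresentation A S)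
    (hsimple : IsSimpleCStarAlgebra A)
    (hne : ∃ a : A, a ≠ 0) (hnotF : ¬ HasFermionProperty A S) :
    ∃ e : A, IsPr e ∧ e ≠ 0 ∧ ∀ a, ∃ c : ℂ, e * a * e = c • e := by
  obtain ⟨n, e, heB, he, he0, hgood⟩ := exists_good_e S hS hne hnotF
  obtain ⟨hmono, hfd, hdense⟩ := hS
  have hdense' : Dense {x | ∃ m, n < m ∧ x ∈ S m} := by
    refine hdense.mono ?_
    intro x hx
    obtain ⟨k, hk⟩ := Set.mem_iUnion.1 hx
    exact ⟨max k n + 1, by omega, hmono (by omega) hk⟩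
  have hcomm0 : ∀ x ∈ {x | ∃ m, n < m ∧ x ∈ S m}, ∀ y ∈ {x | ∃ m, n < m ∧ x ∈ S m},
      (e * x * e) * (e * y * e) = (e * y * e) * (e * x * e) := by
    rintro x ⟨m, hm, hx⟩ y ⟨m', hm', hy⟩
    have := hfd (max m m')
    exact corner_comm (S (max m m')) (hmono (by omega) heB) he (hgood _ (by omega))
      (hmono (by omega) hx) (hmono (by omega) hy)
  have hcomm : ∀ x y : A, (e * x * e) * (e * y * e) = (e * y * e) * (e * x * e) := by
    have hcl1 : ∀ y, IsClosed {x | (e * x * e) * (e * y * e) = (e * y * e) * (e * x * e)} :=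
      fun y => isClosed_eq (by fun_prop) (by fun_prop)
    have hcl2 : ∀ x, IsClosed {y | (e * x * e) * (e * y * e) = (e * y * e) * (e * x * e)} :=
      fun x => isClosed_eq (by fun_prop) (by fun_prop)
    intro x y
    have h1 : ∀ y ∈ {x | ∃ m, n < m ∧ x ∈ S m}, ∀ x,
      (e * x * e) * (e * y * e) = (e * y * e) * (e * x * e) := fun y hy x =>
        closure_minimal (fun x hx => hcomm0 x hx y hy) (hcl1 y) (hdense' x)
    exact closure_minimal (fun y hy => h1 y hy x) (hcl2 x) (hdense' y)
  refine ⟨e, he, he0, ?_⟩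
  have key : ∀ a ∈ {x | ∃ m, n < m ∧ x ∈ S m}, ∃ c : ℂ, e * a * e = c • e := by
    rintro a ⟨m, hm, ha⟩
    have := hfd m
    refine scalarCorner_of_min (S m) (hmono hm.le heB) he ?_ a ha
    intro r hrB hr hr0 hre her
    by_contra hner
    have hrI : r ∈ annIdeal (e - r) := by
      rw [mem_annIdeal]
      intro a
      have h1 : r * a * (e - r) = r * ((e * a * e) * (e * (e - r) * e)) := by
        have : e * (e - r) * e = e - r := by
          rw [mul_sub, he.1, her, sub_mul, he.1, hre]
        rw [this]
        have h2 : e * (e - r) = e - r := by rw [mul_sub, he.1, her]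
        rw [mul_assoc (e * a) e, h2, mul_assoc e a, ← mul_assoc r e, hre, mul_assoc]
      rw [h1, hcomm]
      have h3 : r * (e * (e - r) * e) = 0 := by
        rw [mul_sub, he.1, her, sub_mul, he.1, hre, mul_sub, hre, hr.1, sub_self]
      rw [← mul_assoc, h3, zero_mul]
    rcases hsimple _ (isClosed_annIdeal (e - r)) with h | h
    · rw [h] at hrI
      exact hr0 (by simpa using hrI)
    · have : e - r ∈ annIdeal (e - r) := by rw [h]; trivial
      rw [mem_annIdeal] at this
      have h2 := this (e - r)
      have hpr := he.sub hr hre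
      rw [hpr.1, hpr.1] at h2
      exact hner (sub_eq_zero.1 h2).symm
  have hcl : IsClosed {a : A | e * a * e ∈ (Submodule.span ℂ {e} : Submodule ℂ A)} := by
    have : IsClosed ((Submodule.span ℂ {e} : Submodule ℂ A) : Set A) :=
      Submodule.closed_of_finiteDimensional _
    exact this.preimage (f := fun a => e * a * e) (by fun_prop)
  intro a
  have := closure_minimal (fun a ha => by
    obtain ⟨c, hc⟩ := key a ha
    exact Submodule.mem_span_singleton.2 ⟨c, hc.symm⟩) hcl (hdense' a)
  obtain ⟨c, hc⟩ := Submodule.mem_span_singleton.1 this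
  exact ⟨c, hc.symm⟩
end p3

section p4
open InnerProductSpace
variable {A : Type*} [NonUnitalCStarAlgebra A]

lemma compact_mem_closure {E : Type*} [NormedAddCommGroup E] [InnerProductSpace ℂ E]
    [CompleteSpace E] (R : Submodule ℂ (E →L[ℂ] E)) (hR : ∀ x y : E, rankOne ℂ x y ∈ R)
    (T : E →L[ℂ] E) (hT : IsCompactOperator T) : T ∈ closure (R : Set (E →L[ℂ] E)) := by
  rw [Metric.mem_closure_iff]
  intro ε hε
  have hcomp : IsCompact (closure (T '' Metric.closedBall 0 1)) :=
    IsCompactOperator.isCompact_closure_image_closedBall (f := (T : E →ₗ[ℂ] E)) hT 1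
  obtain ⟨t, htf, ht⟩ := Metric.totallyBounded_iff.1 hcomp.totallyBounded (ε / 4) (by positivity)
  let V := Submodule.span ℂ t
  have : FiniteDimensional ℂ V := FiniteDimensional.span_of_finite ℂ htf
  refine ⟨V.starProjection ∘L T, ?_, ?_⟩
  · rw [(stdOrthonormalBasis ℂ V).starProjection_eq_sum_rankOne, ContinuousLinearMap.finsetSum_comp]
    refine R.sum_mem fun i _ => ?_
    rw [rankOne_comp]
    exact hR _ _
  · rw [dist_eq_norm]
    refine lt_of_le_of_lt (ContinuousLinearMap.opNorm_le_of_unit_norm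
      (C := ε / 2) (by positivity) ?_) (by linarith)
    intro z hz
    have hmem : T z ∈ closure (T '' Metric.closedBall 0 1) :=
      subset_closure ⟨z, by simp [hz], rfl⟩
    obtain ⟨y, hy, hyz⟩ := Set.mem_iUnion₂.1 (ht hmem)
    have hyV : V.starProjection y = y :=
      Submodule.starProjection_eq_self_iff.2 (Submodule.subset_span hy)
    rw [Metric.mem_ball, dist_eq_norm] at hyz
    have : (T - V.starProjection ∘L T) z = (T z - y) - V.starProjection (T z - y) := by
      simp [hyV]
    rw [this]
    have h1 := V.norm_starProjection_apply_le (T z - y)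
    calc _ ≤ ‖T z - y‖ + ‖V.starProjection (T z - y)‖ := norm_sub_le _ _
      _ ≤ ε / 2 := by linarith

lemma rep_injective (hsimple : IsSimpleCStarAlgebra A)
    {E : Type*} [NormedAddCommGroup E] [InnerProductSpace ℂ E]
    [CompleteSpace E] (π : A →⋆ₙₐ[ℂ] (E →L[ℂ] E)) (hne : ∃ a, π a ≠ 0) :
    Function.Injective π := by
  have hcont : Continuous π := by
    open scoped CStarAlgebra in
    exact map_continuous π
  let I : TwoSidedIdeal A := TwoSidedIdeal.mk' {x | π x = 0} (map_zero π)
    (by intro x y hx hy; simp only [Set.mem_ofPred_eq] at *; rw [map_add, hx, hy, add_zero])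
    (by intro x hx; simp only [Set.mem_ofPred_eq] at *; rw [map_neg, hx, neg_zero])
    (by intro x y hy; simp only [Set.mem_ofPred_eq] at *; rw [map_mul, hy, mul_zero])
    (by intro x y hx; simp only [Set.mem_ofPred_eq] at *; rw [map_mul, hx, zero_mul])
  have hI : ∀ x, x ∈ I ↔ π x = 0 := fun x => by
    simp only [I]; rw [TwoSidedIdeal.mem_mk']; rfl
  have hcl : IsClosed (I : Set A) := by
    have : (I : Set A) = {x | π x = 0} := by ext x; exact hI x
    rw [this]
    exact isClosed_eq hcont continuous_const
  rcases hsimple I hcl with h | h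
  · rw [injective_iff_map_eq_zero]
    intro a ha
    have := (hI a).2 ha
    rw [h] at this
    simpa using this
  · obtain ⟨a, ha⟩ := hne
    exact absurd ((hI a).1 (by rw [h]; trivial)) ha

lemma rep_compact (hsimple : IsSimpleCStarAlgebra A)
    {E : Type*} [NormedAddCommGroup E] [InnerProductSpace ℂ E]
    [CompleteSpace E] (π : A →⋆ₙₐ[ℂ] (E →L[ℂ] E))
    (hne : ∃ a, π a ≠ 0 ∧ IsCompactOperator (π a)) (a : A) : IsCompactOperator (π a) := by
  have hcont : Continuous π := by
    open scoped CStarAlgebra in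
    exact map_continuous π
  let I : TwoSidedIdeal A := TwoSidedIdeal.mk' {x | IsCompactOperator (π x)}
    (by simp only [Set.mem_ofPred_eq, map_zero]; exact isCompactOperator_zero)
    (by intro x y hx hy; simp only [Set.mem_ofPred_eq] at *; rw [map_add]; exact hx.add hy)
    (by intro x hx; simp only [Set.mem_ofPred_eq] at *; rw [map_neg]; exact hx.neg)
    (by intro x y hy; simp only [Set.mem_ofPred_eq] at *; rw [map_mul]; exact hy.clm_comp _)
    (by intro x y hx; simp only [Set.mem_ofPred_eq] at *; rw [map_mul]; exact hx.comp_clm _)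
  have hI : ∀ x, x ∈ I ↔ IsCompactOperator (π x) := fun x => by
    simp only [I]; rw [TwoSidedIdeal.mem_mk']; rfl
  have hcl : IsClosed (I : Set A) := by
    have : (I : Set A) = π ⁻¹' {x | IsCompactOperator x} := by ext x; exact hI x
    rw [this]
    exact isClosed_setOfPred_isCompactOperator.preimage hcont
  rcases hsimple I hcl with h | h
  · obtain ⟨b, hb, hbc⟩ := hne
    have := (hI b).2 hbc
    rw [h] at this
    have hb0 : b = 0 := by simpa using this
    exact absurd (by rw [hb0, map_zero]) hb
  · exact (hI a).1 (by rw [h]; trivial)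


lemma isCompact_rankOne {E : Type*} [NormedAddCommGroup E] [InnerProductSpace ℂ E]
    [CompleteSpace E] (x y : E) : IsCompactOperator (rankOne ℂ x y) := by
  rw [rankOne_def']
  have h : IsCompactOperator (innerSL ℂ y : E →L[ℂ] ℂ) :=
    isCompactOperator_of_locallyCompactSpace_dom (innerSL ℂ y : E →L[ℂ] ℂ)
  exact h.clm_comp (ContinuousLinearMap.toSpanSingleton ℂ x)

lemma iso_of_rep (hsimple : IsSimpleCStarAlgebra A) (π : A →⋆ₙₐ[ℂ] (H →L[ℂ] H))
    (hrank : ∀ x y : H, ∃ a, π a = rankOne ℂ x y) :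
    ∃ f : A ≃ₗ[ℂ] ↥CompactOperators,
      (∀ x y : A, ((f (x * y) : H →L[ℂ] H)) = (f x : H →L[ℂ] H) * (f y : H →L[ℂ] H)) ∧
      (∀ x : A, ((f (star x) : H →L[ℂ] H)) = star (f x : H →L[ℂ] H)) := by
  have hne : ∃ a, π a ≠ 0 ∧ IsCompactOperator (π a) := by
    let x : H := lp.single 2 0 (1 : ℂ)
    have hx : x ≠ 0 := by
      intro h
      have := congrArg norm h
      simp [x, lp.norm_single] at this
    obtain ⟨a, ha⟩ := hrank x x
    refine ⟨a, ?_, ?_⟩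
    · intro h0
      have := congrArg norm (ha.symm.trans h0)
      rw [norm_rankOne, norm_zero] at this
      simp [hx] at this
    · rw [ha]; exact isCompact_rankOne x x
  have hinj := rep_injective hsimple π (hne.imp fun a h => h.1)
  have hcpt := rep_compact hsimple π hne
  let g : A →ₗ[ℂ] ↥CompactOperators :=
    LinearMap.codRestrict CompactOperators (π : A →ₗ[ℂ] (H →L[ℂ] H)) hcpt
  have hg : ∀ a, (g a : H →L[ℂ] H) = π a := fun a => rfl
  have hbij : Function.Bijective g := by
    constructor
    · intro a b hab
      exact hinj (congrArg Subtype.val hab)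
    · rintro ⟨T, hT⟩
      have hclosed : IsClosed (Set.range π) :=
        (NonUnitalStarAlgHom.isometry π hinj).isClosedEmbedding.isClosed_range
      have := compact_mem_closure (LinearMap.range (π : A →ₗ[ℂ] (H →L[ℂ] H)))
        (fun x y => hrank x y) T hT
      have h2 : T ∈ closure (Set.range π) := this
      rw [hclosed.closure_eq] at h2
      obtain ⟨a, ha⟩ := h2
      exact ⟨a, Subtype.ext ha⟩
  exact ⟨LinearEquiv.ofBijective g hbij, fun x y => map_mul π x y, fun x => map_star π x⟩

lemma exists_l2_iso {E : Type*} [NormedAddCommGroup E] [InnerProductSpace ℂ E]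
    [CompleteSpace E] [TopologicalSpace.SeparableSpace E] (hinf : ¬ FiniteDimensional ℂ E) :
    Nonempty (E ≃ₗᵢ[ℂ] H) := by
  obtain ⟨w, b, hb⟩ := exists_hilbertBasis ℂ E
  have hcount : Countable w := by
    refine Pairwise.countable_of_isOpen_disjoint (s := fun i : w => Metric.ball (i : E) (1/2))
      ?_ (fun i => Metric.isOpen_ball) (fun i => ⟨i, by simp⟩)
    intro i j hij
    apply Metric.ball_disjoint_ball
    have ho := b.orthonormal
    rw [hb] at ho
    have h1 : ‖(i : E) - j‖ ^ 2 = 2 := by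
      rw [@norm_sub_sq ℂ, ho.1 i, ho.1 j, ho.2 hij]
      norm_num
    rw [dist_eq_norm]
    nlinarith [norm_nonneg ((i : E) - j)]
  have hinfw : Infinite w := by
    by_contra hfin
    rw [not_infinite_iff_finite] at hfin
    have := Fintype.ofFinite w
    exact hinf (b.toOrthonormalBasis.toBasis.finiteDimensional_of_finite)
  obtain ⟨φ⟩ : Nonempty (ℕ ≃ w) := inferInstance
  have ho : Orthonormal ℂ (fun n => b (φ n)) := b.orthonormal.comp _ φ.injective
  have hr : Set.range (fun n => b (φ n)) = Set.range b := φ.surjective.range_comp b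
  let b' : HilbertBasis ℕ ℂ E := HilbertBasis.mk ho (by rw [hr, b.dense_span])
  exact ⟨b'.repr⟩

lemma iso_of_rep_gen (hsimple : IsSimpleCStarAlgebra A) (hinf : ¬ FiniteDimensional ℂ A)
    {E : Type*} [NormedAddCommGroup E] [InnerProductSpace ℂ E]
    [CompleteSpace E] [TopologicalSpace.SeparableSpace E] (π : A →⋆ₙₐ[ℂ] (E →L[ℂ] E))
    (hrank : ∀ x y : E, ∃ a, π a = rankOne ℂ x y) (hne : ∃ a, π a ≠ 0) :
    ∃ f : A ≃ₗ[ℂ] ↥CompactOperators,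
      (∀ x y : A, ((f (x * y) : H →L[ℂ] H)) = (f x : H →L[ℂ] H) * (f y : H →L[ℂ] H)) ∧
      (∀ x : A, ((f (star x) : H →L[ℂ] H)) = star (f x : H →L[ℂ] H)) := by
  have hinj := rep_injective hsimple π hne
  have hEinf : ¬ FiniteDimensional ℂ E := by
    intro hfd
    apply hinf
    let g : A →ₗ[ℂ] (E →ₗ[ℂ] E) :=
      (ContinuousLinearMap.coeLM ℂ).comp (π : A →ₗ[ℂ] (E →L[ℂ] E))
    refine FiniteDimensional.of_injective g ?_
    intro a b hab
    exact hinj (ContinuousLinearMap.coe_injective hab)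
  obtain ⟨U⟩ := exists_l2_iso hEinf
  let Φ : (E →L[ℂ] E) →⋆ₙₐ[ℂ] (H →L[ℂ] H) := 
    { toFun := fun T => U.conjStarAlgEquiv T
      map_smul' := fun c T => map_smul U.conjStarAlgEquiv c T
      map_zero' := map_zero U.conjStarAlgEquiv
      map_add' := map_add U.conjStarAlgEquiv
      map_mul' := map_mul U.conjStarAlgEquiv
      map_star' := map_star U.conjStarAlgEquiv }
  refine iso_of_rep hsimple (Φ.comp π) ?_
  intro x y
  obtain ⟨a, ha⟩ := hrank (U.symm x) (U.symm y)
  refine ⟨a, ?_⟩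
  ext1 z
  have : (Φ.comp π) a z = U (π a (U.symm z)) := rfl
  rw [this, ha]
  simp
end p4

section p5
open InnerProductSpace
variable {A : Type*} [NonUnitalCStarAlgebra A]

/-- The left ideal `A e` -/
def leftIdl (e : A) : Submodule ℂ A where
  carrier := {b | b * e = b}
  add_mem' := by
    intro a b ha hb
    simp only [Set.mem_ofPred_eq] at *
    simp [add_mul, ha, hb]
  zero_mem' := by simp
  smul_mem' := by
    intro c a ha
    simp only [Set.mem_ofPred_eq] at *
    simp [smul_mul_assoc, ha]

lemma mem_leftIdl {e x : A} : x ∈ leftIdl e ↔ x * e = x := Iff.rfl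

lemma coeff_nonneg {e x : A} (he : IsPr e) (he0 : e ≠ 0) {c : ℂ} (h : star x * x = c • e) :
    ‖x‖ ^ 2 = c.re := by
  have hne : ‖e‖ = 1 := by
    have h1 := CStarRing.norm_star_mul_self (x := e)
    rw [he.2, he.1] at h1
    have h2 : ‖e‖ ≠ 0 := norm_ne_zero_iff.2 he0
    field_simp at h1
    exact h1.symm
  have hn : ‖x‖ ^ 2 = ‖c‖ := by
    have h1 := CStarRing.norm_star_mul_self (x := x)
    rw [h, norm_smul, hne, mul_one] at h1
    rw [h1, sq]
  have hconj : (starRingEnd ℂ) c = c := by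
    have h1 := congrArg star h
    rw [star_mul, star_star, h, star_smul, he.2] at h1
    exact (smul_left_injective ℂ he0 h1).symm
  obtain ⟨r, rfl⟩ := Complex.conj_eq_iff_real.1 hconj
  rw [hn]
  simp only [Complex.norm_real, Complex.ofReal_re, Real.norm_eq_abs, abs_eq_self]
  by_contra hr
  push Not at hr
  letI := CStarAlgebra.spectralOrder A
  haveI := CStarAlgebra.spectralOrderedRing A
  have h1 : 0 ≤ star x * x := star_mul_self_nonneg x
  have h2 : 0 ≤ star (((Real.sqrt (-r) : ℝ) : ℂ) • e) * (((Real.sqrt (-r) : ℝ) : ℂ) • e) :=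
    star_mul_self_nonneg _
  have h3 : star (((Real.sqrt (-r) : ℝ) : ℂ) • e) * (((Real.sqrt (-r) : ℝ) : ℂ) • e)
      = - ((r : ℂ) • e) := by
    rw [star_smul, he.2, smul_mul_assoc, mul_smul_comm, he.1, smul_smul, ← neg_smul]
    congr 1
    simp only [RCLike.star_def, Complex.conj_ofReal]
    rw [← Complex.ofReal_mul, Real.mul_self_sqrt (by linarith)]
    simp
  rw [h3] at h2
  rw [h] at h1
  have h4 : (r : ℂ) • e = 0 := le_antisymm (neg_nonneg.1 h2) h1
  rcases smul_eq_zero.1 h4 with h5 | h5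
  · exact hr.ne (by exact_mod_cast h5)
  · exact he0 h5

/-- The Hilbert space structure on `A e`. -/
@[reducible]
def leftInner (e : A) (he : IsPr e) (he0 : e ≠ 0) (hsc : ∀ a, ∃ c : ℂ, e * a * e = c • e) :
    InnerProductSpace ℂ (leftIdl e) :=
  have key : ∀ x y : leftIdl e, star (x : A) * y = (hsc (star (x : A) * y)).choose • e := by
    intro x y
    rw [← (hsc (star (x : A) * y)).choose_spec]
    have hx := mem_leftIdl.1 x.2
    have hy := mem_leftIdl.1 y.2
    have hx' : e * star (x : A) = star (x : A) := by
      have := congrArg star hx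
      rwa [star_mul, he.2] at this
    rw [← mul_assoc, hx', mul_assoc, hy]
  have uniq : ∀ (x y : leftIdl e) (c : ℂ), star (x : A) * y = c • e →
      (hsc (star (x : A) * y)).choose = c := by
    intro x y c h
    exact smul_left_injective ℂ he0 ((key x y).symm.trans h)
  { inner := fun x y => (hsc (star (x : A) * y)).choose
    norm_sq_eq_re_inner := fun x => coeff_nonneg he he0 (key x x)
    conj_inner_symm := fun x y => by
      refine (uniq x y _ ?_).symm
      have := congrArg star (key y x)
      rw [star_mul, star_star, star_smul, he.2] at this
      exact this
    add_left := fun x y z => by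
      refine uniq _ _ _ ?_
      rw [add_smul, ← key, ← key, ← add_mul, ← star_add]
      rfl
    smul_left := fun x y r => by
      refine uniq _ _ _ ?_
      rw [mul_smul, ← key, ← smul_mul_assoc]
      change star (r • (x : A)) * _ = _
      rw [star_smul]
      rfl }

lemma leftInner_spec (e : A) (he : IsPr e) (he0 : e ≠ 0)
    (hsc : ∀ a, ∃ c : ℂ, e * a * e = c • e) (x y : leftIdl e) :
    star (x : A) * y = (leftInner e he he0 hsc).inner x y • e := by
  change star (x : A) * y = (hsc (star (x : A) * y)).choose • e
  rw [← (hsc (star (x : A) * y)).choose_spec]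
  have hx := mem_leftIdl.1 x.2
  have hy := mem_leftIdl.1 y.2
  have hx' : e * star (x : A) = star (x : A) := by
    have := congrArg star hx
    rwa [star_mul, he.2] at this
  rw [← mul_assoc, hx', mul_assoc, hy]

/-- left multiplication on `A e` -/
def leftMul (e : A) (a : A) : leftIdl e →L[ℂ] leftIdl e :=
  LinearMap.mkContinuous
    { toFun := fun x => ⟨a * x, by rw [mem_leftIdl, mul_assoc, mem_leftIdl.1 x.2]⟩
      map_add' := fun x y => Subtype.ext (mul_add a x y)
      map_smul' := fun c x => Subtype.ext (mul_smul_comm c a (x : A)) } ‖a‖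
    (fun x => norm_mul_le a (x : A))

lemma leftMul_apply (e a : A) (x : leftIdl e) : ((leftMul e a x : leftIdl e) : A) = a * x := rfl

lemma separable_of_AF (S : ℕ → NonUnitalStarSubalgebra ℂ A) (hS : IsAFPresentation A S) :
    TopologicalSpace.SeparableSpace A := by
  obtain ⟨-, hfd, hdense⟩ := hS
  rw [← hdense.isSeparable_iff, TopologicalSpace.isSeparable_iUnion]
  intro k
  have : FiniteDimensional ℂ (S k).toNonUnitalSubalgebra.toSubmodule := hfd k
  obtain ⟨s, hs⟩ : (S k).toNonUnitalSubalgebra.toSubmodule.FG :=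
    Module.Finite.iff_fg.1 this
  have h2 : TopologicalSpace.IsSeparable
      ((Submodule.span ℂ (s : Set A) : Submodule ℂ A) : Set A) :=
    (s.finite_toSet.isSeparable).span
  rw [hs] at h2
  exact h2


theorem main_aux
    (SA : ℕ → NonUnitalStarSubalgebra ℂ A) (hSA : IsAFPresentation A SA)
    (hAsimple : IsSimpleCStarAlgebra A)
    (hAinf : ¬ FiniteDimensional ℂ A)
    (hnotF : ¬ HasFermionProperty A SA) :
    ∃ f : A ≃ₗ[ℂ] ↥CompactOperators,
      (∀ x y : A, ((f (x * y) : H →L[ℂ] H)) = (f x : H →L[ℂ] H) * (f y : H →L[ℂ] H)) ∧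
      (∀ x : A, ((f (star x) : H →L[ℂ] H)) = star (f x : H →L[ℂ] H)) := by
  have hne : ∃ a : A, a ≠ 0 := by
    by_contra! h
    have : Subsingleton A := ⟨fun a b => by rw [h a, h b]⟩
    exact hAinf inferInstance
  obtain ⟨e, he, he0, hsc⟩ := exists_minimal_e SA hSA hAsimple hne hnotF
  have hsep := separable_of_AF SA hSA
  have hcl : IsClosed (leftIdl e : Set A) :=
    isClosed_eq (f := fun b : A => b * e) (g := fun b => b) (by fun_prop) continuous_id
  have : CompleteSpace (leftIdl e) := hcl.completeSpace_coe
  have : TopologicalSpace.SeparableSpace (leftIdl e) :=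
    (TopologicalSpace.IsSeparable.of_separableSpace (leftIdl e : Set A)).separableSpace
  letI := leftInner e he he0 hsc
  have hspec : ∀ x y : leftIdl e, star (x : A) * y = inner ℂ x y • e :=
    leftInner_spec e he he0 hsc
  let π : A →⋆ₙₐ[ℂ] (leftIdl e →L[ℂ] leftIdl e) :=
    { toFun := leftMul e
      map_smul' := fun c a => by
        ext x; simp [leftMul_apply, smul_mul_assoc]
      map_zero' := by ext x; simp [leftMul_apply]
      map_add' := fun a b => by ext x; simp [leftMul_apply, add_mul]
      map_mul' := fun a b => by ext x; simp [leftMul_apply, mul_assoc]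
      map_star' := fun a => by
        rw [ContinuousLinearMap.star_eq_adjoint, ContinuousLinearMap.eq_adjoint_iff]
        intro x y
        apply smul_left_injective ℂ he0
        change _ • e = _ • e
        rw [← hspec, ← hspec, leftMul_apply, leftMul_apply, star_mul, star_star, mul_assoc] }
  have hπ : ∀ a, π a = leftMul e a := fun a => rfl
  refine iso_of_rep_gen hAsimple hAinf π ?_ ⟨e, ?_⟩
  · intro x y
    refine ⟨x * star (y : A), ?_⟩
    ext z
    rw [hπ, leftMul_apply, mul_assoc, hspec, mul_smul_comm, mem_leftIdl.1 x.2]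
    rfl
  · intro h
    have := congrArg (fun T => ((T ⟨e, he.1⟩ : leftIdl e) : A)) h
    rw [hπ] at this
    simp only [leftMul_apply, he.1] at this
    exact he0 this
end p5

/-- An infinite-dimensional simple AF C*-algebra with a presentation failing
the Fermion property is *-isomorphic to the compact operators: there is a
ℂ-linear bijection which is multiplicative and star-preserving (computed in
the ambient algebra of bounded operators, whose star is the Hilbert space
adjoint). -/
theorem starIsomorphic_compactOperators_of_not_fermion
    (A : Type*) [NonUnitalCStarAlgebra A]
    (SA : ℕ → NonUnitalStarSubalgebra ℂ A) (hSA : IsAFPresentation A SA)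
    (hAsimple : IsSimpleCStarAlgebra A)
    (hAinf : ¬ FiniteDimensional ℂ A)
    (hnotF : ¬ HasFermionProperty A SA) :
    ∃ f : A ≃ₗ[ℂ] ↥CompactOperators,
      (∀ x y : A, ((f (x * y) : H →L[ℂ] H)) = (f x : H →L[ℂ] H) * (f y : H →L[ℂ] H)) ∧
      (∀ x : A, ((f (star x) : H →L[ℂ] H)) = star (f x : H →L[ℂ] H)) := by
  exact main_aux SA hSA hAsimple hAinf hnotF
end
end

section
/- The Banach space c₀ = C₀(ℕ, ℂ) of complex sequences converging to 0, with the supremum norm, is not isomorphic as a Banach space to K, the space of compact operators on ℓ²(ℕ, ℂ) with the operator norm; that is, there is no continuous ℂ-linear bijection between them with continuous inverse. -/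
/-!
Statement 10.

`c₀ = C₀(ℕ, ℂ)` is not isomorphic as a Banach space to the compact operators
`K` on `ℓ²(ℕ, ℂ)`.
-/

noncomputable section

local notation "H" => lp (fun _ : ℕ => ℂ) 2

/-- `ℓ²` does not embed into `c₀`: gliding hump. -/
theorem no_embed_aux {E : Type*} [NormedAddCommGroup E] [InnerProductSpace ℂ E] [CompleteSpace E]
    (u : ℕ → E) (hu : Orthonormal ℂ u) (T : E →L[ℂ] ZeroAtInftyContinuousMap ℕ ℂ)
    (c : ℝ) (hc : ∀ v, ‖v‖ ≤ c * ‖T v‖) : False := by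
  have hnorm : ∀ (f : ZeroAtInftyContinuousMap ℕ ℂ) (k : ℕ), ‖f k‖ ≤ ‖f‖ := fun f k => by
    rw [← ZeroAtInftyContinuousMap.norm_toBCF_eq_norm]
    exact f.toBCF.norm_coe_le_norm k
  have hcoord : ∀ k : ℕ, Filter.Tendsto (fun m => ‖T (u m) k‖) Filter.atTop (nhds 0) := by
    intro k
    let φ : E →L[ℂ] ℂ := LinearMap.mkContinuous
      { toFun := fun v => T v k
        map_add' := fun x y => by simp
        map_smul' := fun a x => by simp } ‖T‖ (fun x => (hnorm _ k).trans (T.le_opNorm x))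
    obtain ⟨w, hw⟩ := (InnerProductSpace.toDual ℂ E).surjective φ
    have h1 : ∀ v, inner ℂ w v = T v k := fun v => by
      rw [← InnerProductSpace.toDual_apply_apply (𝕜 := ℂ), hw]; rfl
    have h2 := (hu.inner_products_summable w).tendsto_atTop_zero
    have h3 := h2.sqrt
    simp only [Real.sqrt_zero, Real.sqrt_sq (norm_nonneg _)] at h3
    refine h3.congr fun m => ?_
    rw [← h1, norm_inner_symm]
  have key : ∀ ε > 0, ∀ n : ℕ, ∃ F : Finset ℕ, F.card = n ∧
      ‖T (∑ i ∈ F, u i)‖ ≤ ‖T‖ + n * ε := by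
    intro ε hε n
    induction n with
    | zero => exact ⟨∅, rfl, by simp; exact norm_nonneg T⟩
    | succ n ih =>
      obtain ⟨F, hF, hb⟩ := ih
      set y := T (∑ i ∈ F, u i) with hy
      have hz : Filter.Tendsto y Filter.atTop (nhds 0) := by
        have := y.zero_at_infty'
        rwa [Filter.cocompact_eq_cofinite, Nat.cofinite_eq_atTop] at this
      have hz' := hz.norm
      rw [norm_zero] at hz'
      obtain ⟨N, hN⟩ := Filter.eventually_atTop.1 (hz'.eventually_lt_const hε)
      have hev : ∀ᶠ m in Filter.atTop, ∀ k ∈ Finset.range N, ‖T (u m) k‖ < ε :=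
        (Filter.eventually_all_finset _).2 fun k _ => (hcoord k).eventually_lt_const hε
      have hev2 : ∀ᶠ m in Filter.atTop, m ∉ F := by
        rw [← Nat.cofinite_eq_atTop]
        exact F.finite_toSet.eventually_cofinite_notMem
      obtain ⟨m, hm, hmF⟩ := (hev.and hev2).exists
      refine ⟨insert m F, by simp [hmF, hF], ?_⟩
      rw [Finset.sum_insert hmF, map_add, ← hy, ← ZeroAtInftyContinuousMap.norm_toBCF_eq_norm]
      have hTn := norm_nonneg T
      have hnn : 0 ≤ (n : ℝ) * ε := by positivity
      refine (BoundedContinuousFunction.norm_le (by positivity)).2 fun k => ?_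
      change ‖T (u m) k + y k‖ ≤ _
      refine (norm_add_le _ _).trans ?_
      push_cast
      rcases lt_or_ge k N with hk | hk
      · have h1 := hm k (Finset.mem_range.2 hk)
        have h2 := hnorm y k
        linarith
      · have h1 := hN k hk
        have h2 := (hnorm (T (u m)) k).trans (T.le_opNorm (u m))
        rw [hu.1 m, mul_one] at h2
        linarith
  have hsq : ∀ F : Finset ℕ, ‖∑ i ∈ F, u i‖ ^ 2 = F.card := by
    intro F
    have h := hu.inner_sum (fun _ => (1 : ℂ)) (fun _ => 1) F
    simp only [one_smul, map_one, mul_one, Finset.sum_const, nsmul_eq_mul] at h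
    rw [inner_self_eq_norm_sq_to_K] at h
    apply Complex.ofReal_injective
    simpa using h
  obtain ⟨n, hn⟩ := exists_nat_gt ((|c| * (‖T‖ + 1)) ^ 2)
  have hn0 : (0 : ℝ) < n := lt_of_le_of_lt (sq_nonneg _) hn
  obtain ⟨F, hF, hb⟩ := key (1 / n) (by positivity) n
  rw [mul_one_div_cancel hn0.ne'] at hb
  have h1 := hsq F
  rw [hF] at h1
  have h2 : ‖∑ i ∈ F, u i‖ ≤ |c| * (‖T‖ + 1) :=
    (hc _).trans (mul_le_mul (le_abs_self c) hb (norm_nonneg _) (abs_nonneg _))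
  have h3 := pow_le_pow_left₀ (norm_nonneg _) h2 2
  linarith

theorem c0_not_linearly_homeomorphic_compacts :
    ¬ Nonempty (ZeroAtInftyContinuousMap ℕ ℂ ≃L[ℂ] ↥CompactOperators) := by
  rintro ⟨e⟩
  let b : HilbertBasis ℕ ℂ H := HilbertBasis.ofRepr (LinearIsometryEquiv.refl ℂ H)
  have hb : ‖b 0‖ = 1 := b.orthonormal.1 0
  have hcomp : ∀ v : H, InnerProductSpace.rankOne ℂ v (b 0) ∈ CompactOperators := by
    intro v
    change IsCompactOperator (InnerProductSpace.rankOne ℂ v (b 0))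
    rw [InnerProductSpace.rankOne_def']
    have h : IsCompactOperator (ContinuousLinearMap.toSpanSingleton ℂ v) :=
      isCompactOperator_of_locallyCompactSpace_rng _
    exact h.comp_clm (innerSL ℂ (b 0))
  let J : H →L[ℂ] CompactOperators := LinearMap.mkContinuous
    { toFun := fun v => ⟨InnerProductSpace.rankOne ℂ v (b 0), hcomp v⟩
      map_add' := fun x y => by ext1; simp
      map_smul' := fun a x => by ext1; simp } 1 (fun x => by
        change ‖InnerProductSpace.rankOne ℂ x (b 0)‖ ≤ _
        rw [InnerProductSpace.norm_rankOne, hb, mul_one, one_mul])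
  have hJ : ∀ v, ‖J v‖ = ‖v‖ := fun v => by
    change ‖InnerProductSpace.rankOne ℂ v (b 0)‖ = _
    rw [InnerProductSpace.norm_rankOne, hb, mul_one]
  have hbd : ∃ C : ℝ, ∀ x : ZeroAtInftyContinuousMap ℕ ℂ, ‖e x‖ ≤ C * ‖x‖ := by
    let e1 : ZeroAtInftyContinuousMap ℕ ℂ →ₗ[ℂ] CompactOperators :=
      { toFun := fun x => e x
        map_add' := fun x y => e.map_add x y
        map_smul' := fun a x => e.map_smul a x }
    have h1 : Continuous e1 := e.continuous
    obtain ⟨C, -, hC⟩ := SemilinearMapClass.bound_of_continuous (𝕜 := ℂ) (𝕜₂ := ℂ) (σ₁₂ := RingHom.id ℂ) e1 h1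
    exact ⟨C, hC⟩
  obtain ⟨C, hC⟩ := hbd
  refine no_embed_aux b b.orthonormal
    ((e.symm : CompactOperators →L[ℂ] ZeroAtInftyContinuousMap ℕ ℂ).comp J) C fun v => ?_
  have h := hC (e.symm (J v))
  rw [ContinuousLinearEquiv.apply_symm_apply, hJ] at h
  exact h
end
end
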